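/- arXiv:0812.2111 — 3 statements merged into one kernel-verified Lean document; each statement's English description precedes it below -/
import Mathlib

section
/- The set of closed subgroups of ℝⁿ of type (p,q) is contained in the closure (in the Chabauty topology) of the set of closed subgroups of type (r,s) if and only if r ≤ p and r + s ≥ p + q. -/
noncomputable section

abbrev Euc (n : ℕ) := EuclideanSpace ℝ (Fin n)

/-- A point of the Chabauty space of ℝⁿ: a closed additive subgroup. -/
def ChabautyPoint (n : ℕ) : Type := {Γ : AddSubgroup (Euc n) // IsClosed (Γ : Set (Euc n))}

/-- The Chabauty (Fell) topology on the space of closed subgroups of ℝⁿ. -/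
instance chabautyTopology (n : ℕ) : TopologicalSpace (ChabautyPoint n) :=
  TopologicalSpace.generateFrom
    ({S | ∃ K : Set (Euc n), IsCompact K ∧
        S = {Γ : ChabautyPoint n | ((Γ.1 : Set (Euc n)) ∩ K) = ∅}} ∪
     {S | ∃ U : Set (Euc n), IsOpen U ∧
        S = {Γ : ChabautyPoint n | ((Γ.1 : Set (Euc n)) ∩ U).Nonempty}})

/-- The stratum of type (p,q) closed subgroups of ℝⁿ. -/
def stratum (n p q : ℕ) : Set (ChabautyPoint n) :=
  {Γ : ChabautyPoint n |
    ∃ e : Γ.1 ≃+ ((Fin p → ℝ) × (Fin q → ℤ)), Continuous e ∧ Continuous e.symm}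


open Filter Topology Module

theorem continuous_round_of_forall_mem_range {X : Type*} [TopologicalSpace X] {g : X → ℝ}
    (hg : Continuous g) (hcast : ∀ x, g x ∈ Set.range ((↑) : ℤ → ℝ)) :
    Continuous fun x => round (g x) := by
  rw [Int.isClosedEmbedding_coe_real.isInducing.continuous_iff]
  convert hg using 1
  funext x
  obtain ⟨m, hm⟩ := hcast x
  simp [← hm]

/-- The subgroup of vectors whose coordinates, read through `φ`, are free up to index `r`, integer
multiples of `d i` for `r ≤ i < r + s`, and zero from `r + s` on. -/
def modelSubgroup {n : ℕ} (φ : Euc n ≃L[ℝ] (Fin n → ℝ)) (r s : ℕ) (d : Fin n → ℝ) :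
    AddSubgroup (Euc n) where
  carrier := {x | ∀ i : Fin n,
    (r ≤ i → (i : ℕ) < r + s → φ x i / d i ∈ Set.range ((↑) : ℤ → ℝ)) ∧
      (r + s ≤ i → φ x i = 0)}
  zero_mem' i := ⟨fun _ _ => ⟨0, by simp⟩, fun _ => by simp⟩
  add_mem' {x y} hx hy i := by
    refine ⟨fun h h' => ?_, fun h => by simp [(hx i).2 h, (hy i).2 h]⟩
    obtain ⟨a, ha⟩ := (hx i).1 h h'
    obtain ⟨b, hb⟩ := (hy i).1 h h'
    exact ⟨a + b, by simp [ha, hb, add_div]⟩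
  neg_mem' {x} hx i := by
    refine ⟨fun h h' => ?_, fun h => by simp [(hx i).2 h]⟩
    obtain ⟨a, ha⟩ := (hx i).1 h h'
    exact ⟨-a, by simp [ha, neg_div]⟩

theorem mem_modelSubgroup {n : ℕ} {φ : Euc n ≃L[ℝ] (Fin n → ℝ)} {r s : ℕ} {d : Fin n → ℝ}
    {x : Euc n} : x ∈ modelSubgroup φ r s d ↔ ∀ i : Fin n,
      (r ≤ i → (i : ℕ) < r + s → φ x i / d i ∈ Set.range ((↑) : ℤ → ℝ)) ∧
        (r + s ≤ i → φ x i = 0) :=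
  Iff.rfl

theorem isClosed_modelSubgroup {n : ℕ} (φ : Euc n ≃L[ℝ] (Fin n → ℝ)) (r s : ℕ) (d : Fin n → ℝ) :
    IsClosed (modelSubgroup φ r s d : Set (Euc n)) := by
  have hφ (i : Fin n) : Continuous fun x => φ x i := (continuous_apply i).comp φ.continuous
  change IsClosed {x | ∀ i : Fin n, _}
  simp only [Set.ofPred_forall, Set.ofPred_and]
  refine isClosed_iInter fun i => (isClosed_iInter fun _ => isClosed_iInter fun _ => ?_).inter
    (isClosed_iInter fun _ => isClosed_eq (hφ i) continuous_const)
  exact Int.isClosedEmbedding_coe_real.isClosed_range.preimage ((hφ i).div_const _)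

/-- The model subgroup as a point of the Chabauty space. -/
def modelPoint {n : ℕ} (φ : Euc n ≃L[ℝ] (Fin n → ℝ)) (r s : ℕ) (d : Fin n → ℝ) :
    ChabautyPoint n :=
  ⟨modelSubgroup φ r s d, isClosed_modelSubgroup φ r s d⟩

theorem modelPoint_mem_stratum {n : ℕ} (φ : Euc n ≃L[ℝ] (Fin n → ℝ)) {r s : ℕ} {d : Fin n → ℝ}
    (hrs : r + s ≤ n) (hd : ∀ i, d i ≠ 0) : modelPoint φ r s d ∈ stratum n r s := by
  have hcast (x : modelSubgroup φ r s d) (j : Fin s) :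
      φ x ⟨r + j, by lia⟩ / d ⟨r + j, by lia⟩ ∈ Set.range ((↑) : ℤ → ℝ) :=
    (x.2 ⟨r + j, by lia⟩).1 (by simp) (by simp)
  let coord (y : (Fin r → ℝ) × (Fin s → ℤ)) (i : Fin n) : ℝ :=
    if h : (i : ℕ) < r then y.1 ⟨i, h⟩
    else if h' : (i : ℕ) < r + s then y.2 ⟨i - r, by lia⟩ * d i else 0
  have hcoord : Continuous coord := by
    refine continuous_pi fun i => ?_
    by_cases h : (i : ℕ) < r
    · simp only [coord, h, dif_pos]; fun_prop
    by_cases h' : (i : ℕ) < r + s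
    · simp only [coord, h, h', dif_pos, dif_neg, not_false_eq_true]
      have : Continuous fun y : (Fin r → ℝ) × (Fin s → ℤ) => y.2 ⟨i - r, by lia⟩ :=
        (continuous_apply (⟨i - r, by lia⟩ : Fin s)).comp continuous_snd
      exact (Int.isClosedEmbedding_coe_real.continuous.comp this).mul continuous_const
    · simp only [coord, h, h', dif_neg, not_false_eq_true]; fun_prop
  have hmem (y) : φ.symm (coord y) ∈ modelSubgroup φ r s d := by
    intro i
    simp only [ContinuousLinearEquiv.apply_symm_apply, coord]
    refine ⟨fun h h' => ?_, fun h => ?_⟩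
    · rw [dif_neg (by lia), dif_pos h', mul_div_cancel_right₀ _ (hd i)]
      exact ⟨_, rfl⟩
    · rw [dif_neg (by lia), dif_neg (by lia)]
  let e : modelSubgroup φ r s d ≃+ ((Fin r → ℝ) × (Fin s → ℤ)) :=
    { toFun := fun x => (fun i => φ x ⟨i, by lia⟩,
        fun j => round (φ x ⟨r + j, by lia⟩ / d ⟨r + j, by lia⟩))
      invFun := fun y => ⟨φ.symm (coord y), hmem y⟩
      left_inv := by
        intro x
        apply Subtype.ext
        apply φ.injective
        funext i
        simp only [ContinuousLinearEquiv.apply_symm_apply, coord]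
        split_ifs with h h'
        · rfl
        · obtain ⟨m, hm⟩ := (x.2 i).1 (by lia) h'
          have hi : (⟨r + (i - r), by lia⟩ : Fin n) = i := by ext; simp; lia
          rw [hi, ← hm, round_intCast, hm, div_mul_cancel₀ _ (hd i)]
        · exact ((x.2 i).2 (by lia)).symm
      right_inv := by
        intro y
        ext j
        · simp [coord]
        · simp [coord, hd]
      map_add' := by
        intro x y
        ext j
        · simp
        · obtain ⟨a, ha⟩ := hcast x j
          obtain ⟨b, hb⟩ := hcast y j
          simp only [AddSubgroup.coe_add, map_add, Pi.add_apply, add_div, ← ha, ← hb, Prod.mk_add_mk]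
          rw [← Int.cast_add]
          simp only [round_intCast] }
  refine ⟨e, ?_, (φ.symm.continuous.comp hcoord).subtype_mk _⟩
  have hφ (i : Fin n) : Continuous fun x : modelSubgroup φ r s d => φ x i :=
    (continuous_apply i).comp (φ.continuous.comp continuous_subtype_val)
  exact (continuous_pi fun i => hφ _).prodMk (continuous_pi fun j =>
    continuous_round_of_forall_mem_range ((hφ _).div_const _) fun x => hcast x j)

/-- A closed subgroup of type `(p, q)` is generated by real multiples of `p` vectors and integer
multiples of `q` further vectors, all of them linearly independent. -/
theorem exists_linearIndependent_of_mem_stratum {n p q : ℕ} {Γ : ChabautyPoint n}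
    (hΓ : Γ ∈ stratum n p q) : ∃ c : Fin p ⊕ Fin q → Euc n, LinearIndependent ℝ c ∧
      ∀ x, x ∈ Γ.1 ↔ ∃ (y : Fin p → ℝ) (m : Fin q → ℤ),
        x = ∑ i, y i • c (.inl i) + ∑ j, (m j : ℝ) • c (.inr j) := by
  obtain ⟨e, he, he'⟩ := hΓ
  let ψ : (Fin p → ℝ) × (Fin q → ℤ) →+ Euc n := Γ.1.subtype.comp e.symm.toAddMonoidHom
  have hψ : Continuous ψ := continuous_subtype_val.comp he'
  have hψinj : Function.Injective ψ := Subtype.val_injective.comp e.symm.injective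
  let ψ₁ : (Fin p → ℝ) →L[ℝ] Euc n :=
    (ψ.comp (AddMonoidHom.inl _ _)).toRealLinearMap (hψ.comp (.prodMk_left 0))
  let ψ₂ : (Fin q → ℤ) →ₗ[ℤ] Euc n := (ψ.comp (AddMonoidHom.inr _ _)).toIntLinearMap
  let c : Fin p ⊕ Fin q → Euc n :=
    Sum.elim (fun i => ψ₁ (Pi.single i 1)) (fun j => ψ₂ (Pi.single j 1))
  have hψc (y : Fin p → ℝ) (m : Fin q → ℤ) :
      ψ (y, m) = ∑ i, y i • c (.inl i) + ∑ j, (m j : ℝ) • c (.inr j) := by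
    have h₁ : ψ (y, m) = ψ₁ y + ψ₂ m := by
      change ψ (y, m) = ψ (y, 0) + ψ (0, m)
      rw [← map_add]; simp
    have h₂ : ψ₁ y = ∑ i, y i • c (.inl i) := by
      conv_lhs => rw [pi_eq_sum_univ' y]
      simp only [map_sum, map_smul, c, Sum.elim_inl]
    have h₃ : ψ₂ m = ∑ j, (m j : ℝ) • c (.inr j) := by
      conv_lhs => rw [pi_eq_sum_univ' m]
      simp only [map_sum, map_smul, c, Sum.elim_inr, Int.cast_smul_eq_zsmul]
    rw [h₁, h₂, h₃]
  have hsum (g : Fin p ⊕ Fin q → ℤ) :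
      ∑ k, g k • c k = ψ (fun i => (g (.inl i) : ℝ), fun j => g (.inr j)) := by
    simp [hψc, Fintype.sum_sum_type, Int.cast_smul_eq_zsmul]
  refine ⟨c, ?_, fun x => ⟨fun hx => ?_, ?_⟩⟩
  · have hZ : LinearIndependent ℤ c := by
      rw [Fintype.linearIndependent_iff]
      intro g hg
      rw [hsum, ← map_zero ψ] at hg
      have := hψinj hg
      simp only [Prod.ext_iff, funext_iff, Prod.fst_zero, Prod.snd_zero, Pi.zero_apply,
        Int.cast_eq_zero] at this
      exact fun k => k.rec this.1 this.2
    have hLΓ (x : Submodule.span ℤ (Set.range c)) :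
        ∃ g : Fin p ⊕ Fin q → ℤ, (x : Euc n) =
          ψ (fun i => (g (.inl i) : ℝ), fun j => g (.inr j)) := by
      obtain ⟨g, hg⟩ := (Submodule.mem_span_range_iff_exists_fun ℤ).1 x.2
      exact ⟨g, by rw [← hg, hsum]⟩
    have hmem (x : Submodule.span ℤ (Set.range c)) : (x : Euc n) ∈ Γ.1 := by
      obtain ⟨g, hg⟩ := hLΓ x
      rw [hg]
      exact (e.symm _).2
    let f (x : Submodule.span ℤ (Set.range c)) : (Fin p → ℝ) × (Fin q → ℤ) := e ⟨x, hmem x⟩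
    have hf : Continuous f := he.comp (continuous_subtype_val.subtype_mk _)
    have hfinj : Function.Injective f := fun x y h =>
      Subtype.ext (Subtype.ext_iff.1 (e.injective h) :)
    have hfint (x) (i : Fin p) : (f x).1 i ∈ Set.range ((↑) : ℤ → ℝ) := by
      obtain ⟨g, hg⟩ := hLΓ x
      have : f x = (fun i => (g (.inl i) : ℝ), fun j => g (.inr j)) := by
        rw [← e.apply_symm_apply (fun i => (g (.inl i) : ℝ), fun j => g (.inr j))]
        exact congrArg e (Subtype.ext hg)
      exact ⟨g (.inl i), by rw [this]⟩
    have hdisc : DiscreteTopology (Submodule.span ℤ (Set.range c)) := by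
      refine DiscreteTopology.of_continuous_injective
        (f := fun x => ((fun i => round ((f x).1 i), (f x).2) : (Fin p → ℤ) × (Fin q → ℤ))) ?_ ?_
      · refine (continuous_pi fun i => continuous_round_of_forall_mem_range ?_
          (hfint · i)).prodMk hf.snd
        exact (continuous_apply i).comp hf.fst
      · intro x y hxy
        apply hfinj
        simp only [Prod.ext_iff, funext_iff] at hxy
        refine Prod.ext (funext fun i => ?_) (funext hxy.2)
        obtain ⟨a, ha⟩ := hfint x i
        obtain ⟨b, hb⟩ := hfint y i
        have := hxy.1 i
        rw [← ha, ← hb] at this ⊢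
        simpa using this
    rw [linearIndependent_iff_card_eq_finrank_span] at hZ ⊢
    rw [hZ, Real.finrank_eq_int_finrank_of_discrete hdisc]
  · refine ⟨(e ⟨x, hx⟩).1, (e ⟨x, hx⟩).2, ?_⟩
    rw [← hψc]
    change x = ((e.symm (e ⟨x, hx⟩)) : Euc n)
    rw [e.symm_apply_apply]
  · rintro ⟨y, m, rfl⟩
    rw [← hψc]
    exact (e.symm _).2

theorem tendsto_floor_mul_div (a : ℝ) :
    Tendsto (fun t : ℕ => (⌊a * (t + 1)⌋ : ℝ) / ((t : ℝ) + 1)) atTop (𝓝 a) := by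
  rw [tendsto_iff_norm_sub_tendsto_zero]
  refine squeeze_zero (fun _ => norm_nonneg _) (fun t => ?_) tendsto_one_div_add_atTop_nhds_zero_nat
  have hpos : (0 : ℝ) < t + 1 := by positivity
  rw [div_sub' hpos.ne', norm_div, Real.norm_of_nonneg hpos.le, Real.norm_eq_abs]
  gcongr
  rw [abs_le]
  constructor <;> linarith [Int.floor_le (a * (t + 1)), Int.lt_floor_add_one (a * (t + 1))]

theorem exists_eq_modelPoint {n p q : ℕ} {Γ : ChabautyPoint n}
    (hΓ : Γ ∈ stratum n p q) :
    ∃ φ : Euc n ≃L[ℝ] (Fin n → ℝ), Γ = modelPoint φ p q 1 := by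
  obtain ⟨c, hc, hmem⟩ := exists_linearIndependent_of_mem_stratum hΓ
  let B := Basis.sumExtend hc
  have hB (k) : B (.inl k) = c k := by
    simp only [B, Basis.sumExtend, Basis.reindex_apply, Basis.coe_extend]
    rfl
  have : Finite ((Fin p ⊕ Fin q) ⊕ Basis.sumExtendIndex hc) := Module.Finite.finite_basis B
  have : Finite (Basis.sumExtendIndex hc) :=
    .of_injective (Sum.inr (α := Fin p ⊕ Fin q)) Sum.inr_injective
  have := Fintype.ofFinite (Basis.sumExtendIndex hc)
  have hcard : p + q + Fintype.card (Basis.sumExtendIndex hc) = n := by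
    simpa using (finrank_eq_card_basis B).symm
  let σ : (Fin p ⊕ Fin q) ⊕ Basis.sumExtendIndex hc ≃ Fin n :=
    (finSumFinEquiv.sumCongr (Fintype.equivFin _)).trans (finSumFinEquiv.trans (finCongr hcard))
  have hσ₁ (i : Fin p) : (σ (.inl (.inl i)) : ℕ) = i := by simp [σ]
  have hσ₂ (j : Fin q) : (σ (.inl (.inr j)) : ℕ) = p + j := by simp [σ]
  have hσ₃ (k) : p + q ≤ (σ (.inr k) : ℕ) := by simp [σ]
  let φ : Euc n ≃L[ℝ] (Fin n → ℝ) := (B.reindex σ).equivFunL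
  have hφc (k l) : φ (c k) (σ l) = if .inl k = l then 1 else 0 := by
    have : c k = B.reindex σ (σ (.inl k)) := by simp [hB]
    rw [this]
    simp [φ, Basis.equivFunL_apply, Finsupp.single_apply]
  have hφ (y : Fin p → ℝ) (m : Fin q → ℤ) (l) :
      φ (∑ i, y i • c (.inl i) + ∑ j, (m j : ℝ) • c (.inr j)) (σ l) =
        Sum.elim (Sum.elim y fun j => (m j : ℝ)) (fun _ => 0) l := by
    rcases l with (l | l) | l <;> simp [hφc]
  refine ⟨φ, Subtype.ext (AddSubgroup.ext fun x => (hmem x).trans ⟨?_, fun hx => ?_⟩)⟩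
  · rintro ⟨y, m, rfl⟩
    refine mem_modelSubgroup.2 fun i => ?_
    obtain ⟨l, rfl⟩ := σ.surjective i
    rw [hφ]
    rcases l with (l | l) | l
    · exact ⟨fun h => absurd (h.trans_eq (hσ₁ l)) (by lia), fun h => absurd (h.trans_eq (hσ₁ l)) (by lia)⟩
    · exact ⟨fun _ _ => ⟨m l, by simp⟩, fun h => absurd (h.trans_eq (hσ₂ l)) (by lia)⟩
    · exact ⟨fun _ _ => ⟨0, by simp⟩, fun _ => rfl⟩
  · have hx := mem_modelSubgroup.1 hx
    choose m hm using fun j : Fin q =>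
      (hx (σ (.inl (.inr j)))).1 (by rw [hσ₂]; lia) (by rw [hσ₂]; lia)
    refine ⟨fun i => φ x (σ (.inl (.inl i))), m, φ.injective (funext fun i => ?_)⟩
    obtain ⟨l, rfl⟩ := σ.surjective i
    rw [hφ]
    rcases l with (l | l) | l
    · rfl
    · simpa using (hm l).symm
    · exact (hx _).2 (hσ₃ l)

theorem modelPoint_mem_closure_stratum {n p q r s : ℕ} (φ : Euc n ≃L[ℝ] (Fin n → ℝ))
    (hrs : r + s ≤ n) (hrp : r ≤ p) (hle : p + q ≤ r + s) :
    modelPoint φ p q 1 ∈ closure (stratum n r s) := by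
  let d (t : ℕ) (i : Fin n) : ℝ :=
    if (i : ℕ) < p then ((t : ℝ) + 1)⁻¹ else if (i : ℕ) < p + q then 1 else t + 1
  have hd (t : ℕ) (i : Fin n) : d t i ≠ 0 := by
    have : (t : ℝ) + 1 ≠ 0 := by positivity
    simp only [d]
    split_ifs <;> simp [this]
  refine mem_closure_of_tendsto (f := fun t => modelPoint φ r s (d t)) (b := atTop) ?_
    (.of_forall fun t => modelPoint_mem_stratum φ hrs (hd t))
  rw [TopologicalSpace.tendsto_nhds_generateFrom_iff]
  rintro S (⟨K, hK, rfl⟩ | ⟨U, hU, rfl⟩) hS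
  · obtain ⟨M, hM⟩ := (hK.image φ.continuous).isBounded.exists_norm_le
    filter_upwards [tendsto_natCast_atTop_atTop.eventually_ge_atTop M] with t ht
    refine Set.eq_empty_of_forall_notMem fun x hx => Set.notMem_empty x (hS ▸ ⟨?_, hx.2⟩)
    intro i
    have hxi := mem_modelSubgroup.1 hx.1 i
    refine ⟨fun h h' => ?_, fun h => ?_⟩
    · have := hxi.1 (by lia) (by lia)
      simpa [d, h, h', not_lt.2 h] using this
    · by_cases h' : r + s ≤ i
      · exact hxi.2 h'
      obtain ⟨m, hm⟩ := hxi.1 (by lia) (by lia)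
      have hdi : d t i = t + 1 := by
        simp only [d]; rw [if_neg (by lia), if_neg (by lia)]
      have hpos : (0 : ℝ) < t + 1 := by positivity
      have hlt : |φ x i / d t i| < 1 := by
        rw [hdi, abs_div, abs_of_pos hpos, div_lt_one hpos]
        have := (norm_le_pi_norm (φ x) i).trans (hM _ ⟨x, hx.2, rfl⟩)
        rw [Real.norm_eq_abs] at this
        linarith
      rw [← hm] at hlt
      have hm0 : m = 0 := Int.abs_lt_one_iff.1 (by exact_mod_cast hlt)
      rw [hm0, Int.cast_zero, eq_comm, div_eq_zero_iff] at hm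
      exact hm.resolve_right (hd t i)
  · obtain ⟨x, hx, hxU⟩ := hS
    have hx := mem_modelSubgroup.1 hx
    let y (t : ℕ) (i : Fin n) : ℝ :=
      if r ≤ i ∧ (i : ℕ) < p then ⌊φ x i * (t + 1)⌋ / ((t : ℝ) + 1) else φ x i
    have hy : Tendsto (fun t => φ.symm (y t)) atTop (𝓝 x) := by
      have : Tendsto y atTop (𝓝 (φ x)) := by
        refine tendsto_pi_nhds.2 fun i => ?_
        by_cases h : r ≤ i ∧ (i : ℕ) < p
        · simp only [y, h, and_self, if_true]
          exact tendsto_floor_mul_div (φ x i)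
        · simp only [y, h, if_false]
          exact tendsto_const_nhds
      simpa [Function.comp_def] using (φ.symm.continuous.tendsto _).comp this
    filter_upwards [hy.eventually (hU.mem_nhds hxU)] with t ht
    refine ⟨_, mem_modelSubgroup.2 fun i => ?_, ht⟩
    simp only [ContinuousLinearEquiv.apply_symm_apply, y]
    refine ⟨fun h h' => ?_, fun h => ?_⟩
    · by_cases hp : (i : ℕ) < p
      · simp only [h, hp, d, and_self, if_true]
        refine ⟨⌊φ x i * (t + 1)⌋, ?_⟩
        field_simp
      by_cases hq : (i : ℕ) < p + q
      · have := (hx i).1 (by lia) hq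
        simpa [hp, hq, d] using this
      · exact ⟨0, by simp [hp, (hx i).2 (by lia)]⟩
    · rw [if_neg (by lia)]
      exact (hx i).2 (by lia)

theorem le_of_modelPoint_mem_closure {n p q r s : ℕ} (φ : Euc n ≃L[ℝ] (Fin n → ℝ))
    (hpq : p + q ≤ n)
    (h : modelPoint φ p q 1 ∈ closure (stratum n r s)) : r ≤ p := by
  by_contra! hlt
  let K : Set (Euc n) := φ ⁻¹' ({y | ∀ i : Fin n, (i : ℕ) < p → y i = 0} ∩ Metric.sphere 0 (1 / 2))
  have hK : IsCompact K := by
    refine φ.toHomeomorph.isCompact_preimage.2 (.inter_left (isCompact_sphere _ _) ?_)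
    simp only [Set.ofPred_forall]
    exact isClosed_iInter fun i => isClosed_iInter fun _ =>
      isClosed_eq (continuous_apply i) continuous_const
  have hopen : IsOpen {Γ : ChabautyPoint n | ((Γ.1 : Set (Euc n)) ∩ K) = ∅} :=
    TopologicalSpace.isOpen_generateFrom_of_mem (.inl ⟨K, hK, rfl⟩)
  obtain ⟨Γ, hΓK, hΓ⟩ := mem_closure_iff.1 h _ hopen <| by
    refine Set.eq_empty_of_forall_notMem fun x ⟨hx, hx0, hx1⟩ => ?_
    have : φ x = 0 := by
      funext i
      by_cases hp : (i : ℕ) < p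
      · exact hx0 i hp
      by_cases hq : (i : ℕ) < p + q
      · obtain ⟨m, hm⟩ := (mem_modelSubgroup.1 hx i).1 (by lia) hq
        have hle := norm_le_pi_norm (φ x) i
        rw [mem_sphere_zero_iff_norm.1 hx1, Real.norm_eq_abs] at hle
        simp only [Pi.one_apply, div_one] at hm
        have : |(m : ℝ)| < 1 := by rw [hm]; linarith
        have hm0 : m = 0 := Int.abs_lt_one_iff.1 (by exact_mod_cast this)
        simp [← hm, hm0]
      · exact (mem_modelSubgroup.1 hx i).2 (by lia)
    rw [this] at hx1
    norm_num at hx1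
  obtain ⟨c, hc, hmem⟩ := exists_linearIndependent_of_mem_stratum hΓ
  let L : (Fin r → ℝ) →ₗ[ℝ] (Fin n → ℝ) :=
    φ.toLinearEquiv.toLinearMap ∘ₗ Fintype.linearCombination ℝ (c ∘ Sum.inl)
  have hL : Function.Injective L :=
    φ.injective.comp (hc.comp _ Sum.inl_injective).fintypeLinearCombination_injective
  let P : (Fin r → ℝ) →ₗ[ℝ] (Fin p → ℝ) :=
    LinearMap.funLeft ℝ ℝ (fun i : Fin p => (⟨i, by lia⟩ : Fin n)) ∘ₗ L
  obtain ⟨v, hv, hv0⟩ := P.ker.ne_bot_iff.1 (P.ker_ne_bot_of_finrank_lt (by simpa using hlt))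
  have hLv : ‖L v‖ ≠ 0 := by simpa using (map_ne_zero_iff L hL).2 hv0
  let w := (1 / 2 * ‖L v‖⁻¹) • v
  have hφw : φ (∑ i, w i • c (.inl i)) = L w := rfl
  refine Set.eq_empty_iff_forall_notMem.1 hΓK (∑ i, w i • c (.inl i))
    ⟨(hmem _).2 ⟨w, 0, by simp⟩, fun i hi => ?_, ?_⟩
  · have := congrFun (LinearMap.mem_ker.1 (P.ker.smul_mem (1 / 2 * ‖L v‖⁻¹) hv)) ⟨i, hi⟩
    exact this
  · rw [mem_sphere_zero_iff_norm, hφw, map_smul, norm_smul]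
    simp [hLv]

theorem add_le_of_modelPoint_mem_closure {n p q r s : ℕ} (φ : Euc n ≃L[ℝ] (Fin n → ℝ))
    (hpq : p + q ≤ n) (h : modelPoint φ p q 1 ∈ closure (stratum n r s)) : p + q ≤ r + s := by
  let v (k : Fin (p + q)) : Euc n := φ.symm (Pi.single (Fin.castLE hpq k) 1)
  have hv : LinearIndependent ℝ v := by
    have := (Pi.linearIndependent_single_one (Fin n) ℝ).comp _ (Fin.castLE_injective hpq)
    exact this.map' φ.symm.toLinearEquiv.toLinearMap (LinearEquiv.ker _)
  obtain ⟨U, hU, hUv⟩ := isOpen_pi_iff'.1 isOpen_setOfPred_linearIndependent v hv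
  have hopen : IsOpen (⋂ k, {Γ : ChabautyPoint n | ((Γ.1 : Set (Euc n)) ∩ U k).Nonempty}) :=
    isOpen_iInter_of_finite fun k =>
      TopologicalSpace.isOpen_generateFrom_of_mem (.inr ⟨U k, (hU k).1, rfl⟩)
  obtain ⟨Γ, hΓU, hΓ⟩ := mem_closure_iff.1 h _ hopen <| Set.mem_iInter.2 fun k => by
    refine ⟨v k, mem_modelSubgroup.2 fun i => ?_, (hU k).2⟩
    simp only [v, ContinuousLinearEquiv.apply_symm_apply, Pi.one_apply, div_one]
    refine ⟨fun _ _ => ⟨if i = Fin.castLE hpq k then 1 else 0, by simp [Pi.single_apply]⟩,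
      fun hi => Pi.single_eq_of_ne ?_ _⟩
    rintro rfl
    simp at hi
    lia
  choose g hgΓ hgU using Set.mem_iInter.1 hΓU
  have hg : LinearIndependent ℝ g := hUv fun k _ => hgU k
  obtain ⟨c, -, hmem⟩ := exists_linearIndependent_of_mem_stratum hΓ
  have hspan : Set.range g ⊆ Submodule.span ℝ (Set.range c) := by
    rintro _ ⟨k, rfl⟩
    obtain ⟨y, m, hym⟩ := (hmem _).1 (hgΓ k)
    rw [hym]
    have hc (k) : c k ∈ Submodule.span ℝ (Set.range c) := Submodule.subset_span ⟨k, rfl⟩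
    exact add_mem (sum_mem fun i _ => Submodule.smul_mem _ _ (hc _))
      (sum_mem fun j _ => Submodule.smul_mem _ _ (hc _))
  have h₁ := Submodule.finrank_mono (Submodule.span_le.2 hspan)
  rw [finrank_span_eq_card hg] at h₁
  simpa using h₁.trans (finrank_range_le_card c)

/-- Frontier condition: 𝒞^{(p,q)} ⊆ closure 𝒞^{(r,s)} iff r ≤ p and p + q ≤ r + s. -/
theorem stratum_closure_iff (n p q r s : ℕ) (hpq : p + q ≤ n) (hrs : r + s ≤ n) :
    stratum n p q ⊆ closure (stratum n r s) ↔ (r ≤ p ∧ p + q ≤ r + s) := by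
  constructor
  · intro h
    have hmem := h (modelPoint_mem_stratum (EuclideanSpace.equiv (Fin n) ℝ) hpq (d := 1) (by simp))
    exact ⟨le_of_modelPoint_mem_closure _ hpq hmem, add_le_of_modelPoint_mem_closure _ hpq hmem⟩
  · rintro ⟨hrp, hle⟩ Γ hΓ
    obtain ⟨φ, rfl⟩ := exists_eq_modelPoint hΓ
    exact modelPoint_mem_closure_stratum φ hrs hrp hle
end
end

section
/- The set 𝒞^{(p,q)} of type (p,q) closed subgroups of ℝⁿ, as an orbit of GL(n,ℝ), is a manifold of dimension (p+q)(n−p). -/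
noncomputable section

open Topology Set Filter

/-- The inclusion of the standard lattice `ℤ^q` into `ℝ^q`. -/
def intVec (q : ℕ) : (Fin q → ℤ) →+ (Fin q → ℝ) where
  toFun m j := m j
  map_zero' := by ext; simp
  map_add' _ _ := by ext; simp

@[simp]
theorem intVec_apply {q : ℕ} (m : Fin q → ℤ) (j : Fin q) : intVec q m j = m j := rfl

theorem norm_intVec {q : ℕ} (m : Fin q → ℤ) : ‖intVec q m‖ = ‖m‖ := by
  simp only [Pi.norm_def, intVec_apply]
  congr 2

theorem intVec_single {q : ℕ} (j : Fin q) : intVec q (Pi.single j 1) = Pi.single j 1 := by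
  ext i
  by_cases h : i = j
  · subst h; simp
  · simp [h]

theorem one_le_norm_intVec {q : ℕ} {m : Fin q → ℤ} (hm : m ≠ 0) : 1 ≤ ‖intVec q m‖ := by
  obtain ⟨j, hj⟩ := Function.ne_iff.mp hm
  refine le_trans ?_ (norm_le_pi_norm (intVec q m) j)
  rw [intVec_apply, Int.norm_cast_real, Int.norm_eq_abs]
  exact_mod_cast Int.one_le_abs hj

theorem isClosedEmbedding_intVec (q : ℕ) : IsClosedEmbedding (intVec q) :=
  IsClosedEmbedding.piMap fun _ => Int.isClosedEmbedding_coe_real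

/-- Simultaneous Diophantine approximation, qualitative form. -/
theorem exists_pos_nat_smul_near_intVec {q : ℕ} (b : Fin q → ℝ) {δ : ℝ} (hδ : 0 < δ) :
    ∃ k : ℕ, 0 < k ∧ ∃ m : Fin q → ℤ, ‖(k : ℝ) • b - intVec q m‖ < δ := by
  let u : ℕ → Fin q → ℝ := fun k j => Int.fract ((k : ℝ) * b j)
  have hu : ∀ k, u k ∈ Icc (0 : Fin q → ℝ) 1 := fun k =>
    ⟨fun j => Int.fract_nonneg _, fun j => (Int.fract_lt_one _).le⟩
  obtain ⟨a, -, φ, hφ, hlim⟩ := isCompact_Icc.tendsto_subseq hu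
  obtain ⟨N, hN⟩ := Metric.cauchySeq_iff.mp hlim.cauchySeq δ hδ
  have hlt : φ N < φ (N + 1) := hφ (Nat.lt_succ_self N)
  refine ⟨φ (N + 1) - φ N, by omega,
    fun j => ⌊(φ (N + 1) : ℝ) * b j⌋ - ⌊(φ N : ℝ) * b j⌋, ?_⟩
  have h := hN (N + 1) (by simp) N le_rfl
  rw [dist_eq_norm] at h
  convert h using 1
  congr 1
  ext j
  simp only [u, Function.comp, Pi.sub_apply, Pi.smul_apply, smul_eq_mul, intVec_apply, Int.fract,
    Nat.cast_sub hlt.le, Int.cast_sub]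
  ring

section Lattice

variable {P F : Type*} [NormedAddCommGroup P] [NormedSpace ℝ P]
  [NormedAddCommGroup F] [NormedSpace ℝ F] {q : ℕ}

theorem map_eq_sum_smul_single (B : (Fin q → ℝ) →L[ℝ] F) (v : Fin q → ℝ) :
    B v = ∑ j, v j • B (Pi.single j 1) := by
  conv_lhs => rw [pi_eq_sum_univ' v]
  rw [map_sum]
  refine Finset.sum_congr rfl fun j _ => ?_
  rw [map_smul]

/-- If no element of a subgroup has norm in `[ε, 2ε]`, its only element of norm less than `ε`
is `0`. -/
theorem eq_zero_of_norm_gap {Λ : AddSubgroup F} {ε : ℝ} (hε : 0 < ε)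
    (gap : ∀ l ∈ Λ, ‖l‖ ≤ 2 * ε → ‖l‖ < ε) {l : F} (hl : l ∈ Λ) (h : ‖l‖ < ε) : l = 0 := by
  by_contra hne
  have hpos : 0 < ‖l‖ := norm_pos_iff.mpr hne
  have hall : ∀ k : ℕ, (k : ℝ) * ‖l‖ < ε := by
    intro k
    induction k with
    | zero => simpa using hε
    | succ k ih =>
      have hn : ‖(k + 1) • l‖ = ((k + 1 : ℕ) : ℝ) * ‖l‖ := by
        rw [← Nat.cast_smul_eq_nsmul ℝ, norm_smul, Real.norm_natCast]
      rw [← hn]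
      refine gap _ (Λ.nsmul_mem hl _) ?_
      rw [hn]
      push_cast
      linarith
  obtain ⟨k, hk⟩ := exists_nat_gt (ε / ‖l‖)
  rw [div_lt_iff₀ hpos] at hk
  exact (hall k).not_gt hk

/-- Choice of a large radius `R` and then of a small tolerance `ε` for comparing subgroups. -/
theorem exists_lattice_radius (B₁ : (Fin q → ℝ) →L[ℝ] F) {c : ℝ} (hc : 0 < c)
    {η : ℝ} (hη : 0 < η) :
    ∃ R ε : ℝ, 0 < ε ∧ ε < 1 ∧ 3 * ε ≤ c ∧ ε < η ∧ 2 * q * ε < η ∧ 2 * q * ε < c / 2 ∧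
      1 ≤ R ∧ 2 * ε ≤ R ∧ ‖B₁‖ + c ≤ R ∧ ε + 2 * q * ε * ((R + 1) / c) + ε ≤ c := by
  let R := ‖B₁‖ + c + 2
  have hB := norm_nonneg B₁
  have hR : 2 ≤ R := by simp only [R]; linarith
  have key : ∀ a b : ℝ, 0 < b → ∀ᶠ ε in 𝓝[>] (0 : ℝ), a * ε < b := fun a b hb =>
    nhdsWithin_le_nhds <| ContinuousAt.eventually_lt (by fun_prop) (by fun_prop) (by simpa)
  have hp : ∀ᶠ ε in 𝓝[>] (0 : ℝ), 0 < ε := self_mem_nhdsWithin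
  have h := ((hp.and (key 1 1 one_pos)).and
    ((key 3 c hc).and (key 1 η hη))).and (((key (2 * q) η hη).and
      (key (2 * q) (c / 2) (by positivity))).and (key (2 + 2 * q * ((R + 1) / c)) c hc))
  obtain ⟨ε, ⟨⟨h1, h2⟩, h3, h4⟩, ⟨h5, h6⟩, h7⟩ := h.exists
  refine ⟨R, ε, h1, by linarith, h3.le, by linarith, h5, h6, by linarith, by linarith,
    by simp only [R]; linarith, ?_⟩
  have : ε + 2 * q * ε * ((R + 1) / c) + ε = (2 + 2 * q * ((R + 1) / c)) * ε := by ring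
  rw [this]
  exact h7.le

/-- A linear subspace of `P × F` on which the second coordinate is dominated by `ε < 1` times the
norm, and whose dimension is that of `P`, is the graph of an operator of norm at most `ε`. -/
theorem exists_graph_of_norm_snd_le [FiniteDimensional ℝ P] {W : Submodule ℝ (P × F)}
    [FiniteDimensional ℝ W]
    (hW : Module.finrank ℝ W = Module.finrank ℝ P) {ε : ℝ} (hε : 0 < ε) (hε1 : ε < 1)
    (h : ∀ w ∈ W, ‖w.2‖ ≤ ε * ‖w‖) :
    ∃ A : P →L[ℝ] F, ‖A‖ ≤ ε ∧ ∀ w, w ∈ W ↔ w.2 = A w.1 := by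
  have hle : ∀ w ∈ W, ‖w.2‖ ≤ ε * ‖w.1‖ := by
    intro w hw
    have h1 := h w hw
    rw [Prod.norm_def] at h1
    rcases le_total ‖w.1‖ ‖w.2‖ with h2 | h2
    · rw [max_eq_right h2] at h1
      have : ‖w.2‖ ≤ 0 := by nlinarith [norm_nonneg w.2]
      exact this.trans (by positivity)
    · rwa [max_eq_left h2] at h1
  let f : W →ₗ[ℝ] P := (LinearMap.fst ℝ P F).comp W.subtype
  have hf : Function.Injective f := by
    rw [← LinearMap.ker_eq_bot, LinearMap.ker_eq_bot']
    rintro ⟨w, hw⟩ h0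
    have h1 : w.1 = 0 := h0
    have h2 := hle w hw
    rw [h1, norm_zero, mul_zero, norm_le_zero_iff] at h2
    exact Subtype.ext (Prod.ext h1 h2)
  let g : W ≃ₗ[ℝ] P := LinearEquiv.ofInjectiveOfFinrankEq f hf hW
  have hg : ∀ w : W, g w = (w : P × F).1 := fun w => rfl
  let A : P →ₗ[ℝ] F := (LinearMap.snd ℝ P F).comp (W.subtype.comp g.symm.toLinearMap)
  have hA : ∀ w ∈ W, A w.1 = w.2 := by
    intro w hw
    change ((g.symm (g ⟨w, hw⟩) : W) : P × F).2 = w.2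
    rw [g.symm_apply_apply]
  refine ⟨LinearMap.toContinuousLinearMap A, ?_, fun w => ⟨fun hw => (hA w hw).symm, fun hw => ?_⟩⟩
  · refine ContinuousLinearMap.opNorm_le_bound _ hε.le fun x => ?_
    have h1 := hle _ (g.symm x).2
    rwa [← hg, g.apply_symm_apply] at h1
  · have h1 := hA _ (g.symm w.1).2
    rw [← hg, g.apply_symm_apply] at h1
    have h2 : w = (g.symm w.1 : W) := by
      refine Prod.ext ?_ ?_
      · rw [← hg, g.apply_symm_apply]
      · rw [← h1]
        exact hw
    rw [h2]
    exact (g.symm w.1).2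

/-- Perturbing the images of the standard basis vectors by at most `δ` perturbs the operator by at
most `q * δ`. -/
theorem exists_clm_near (B₁ : (Fin q → ℝ) →L[ℝ] F) {b : Fin q → F} {δ : ℝ} (hδ : 0 ≤ δ)
    (hb : ∀ j, ‖b j - B₁ (Pi.single j 1)‖ ≤ δ) :
    ∃ B : (Fin q → ℝ) →L[ℝ] F, (∀ v, B v = ∑ j, v j • b j) ∧ ‖B - B₁‖ ≤ q * δ := by
  refine ⟨LinearMap.toContinuousLinearMap (Fintype.linearCombination ℝ b),
    fun v => Fintype.linearCombination_apply ℝ b v,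
    ContinuousLinearMap.opNorm_le_bound _ (by positivity) fun v => ?_⟩
  have h : (LinearMap.toContinuousLinearMap (Fintype.linearCombination ℝ b) - B₁) v =
      ∑ j, v j • (b j - B₁ (Pi.single j 1)) := by
    rw [sub_apply, map_eq_sum_smul_single B₁ v]
    simp [Fintype.linearCombination_apply, smul_sub, Finset.sum_sub_distrib]
  rw [h]
  calc ‖∑ j, v j • (b j - B₁ (Pi.single j 1))‖
      ≤ ∑ j, ‖v j • (b j - B₁ (Pi.single j 1))‖ := norm_sum_le _ _
    _ ≤ ∑ _j : Fin q, ‖v‖ * δ := by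
        refine Finset.sum_le_sum fun j _ => ?_
        rw [norm_smul]
        exact mul_le_mul (norm_le_pi_norm v j) (hb j) (norm_nonneg _) (norm_nonneg _)
    _ = q * δ * ‖v‖ := by
        rw [Finset.sum_const, Finset.card_univ, Fintype.card_fin, nsmul_eq_mul]
        ring

theorem le_norm_map_of_norm_sub_le {B B₁ : (Fin q → ℝ) →L[ℝ] F} {c d : ℝ}
    (hB₁ : ∀ v, c * ‖v‖ ≤ ‖B₁ v‖) (h : ‖B - B₁‖ ≤ d) (v : Fin q → ℝ) :
    (c - d) * ‖v‖ ≤ ‖B v‖ := by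
  have h1 : ‖(B - B₁) v‖ ≤ d * ‖v‖ := (B - B₁).le_of_opNorm_le h v
  have h2 : ‖B₁ v‖ - ‖B v‖ ≤ ‖(B - B₁) v‖ := by
    rw [sub_apply, norm_sub_rev]
    exact norm_sub_norm_le _ _
  linarith [hB₁ v]

/-- A closed subgroup of the shape `W + ℤ v₁ + ⋯ + ℤ v_q` that is close enough, on a large ball, to
`P × B₁(ℤ^q)` is of the form `{(x, A x + B m)}` with `A` small and `B` close to `B₁`. -/
theorem exists_normal_form_of_near [FiniteDimensional ℝ P] [FiniteDimensional ℝ F]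
    (B₁ : (Fin q → ℝ) →L[ℝ] F) {c : ℝ} (hc : 0 < c) (hB₁ : ∀ v, c * ‖v‖ ≤ ‖B₁ v‖)
    {η : ℝ} (hη : 0 < η) :
    ∃ R ε : ℝ, 0 < ε ∧ ∀ (G : AddSubgroup (P × F)) (W : Submodule ℝ (P × F)) (v : Fin q → P × F),
      Module.finrank ℝ W = Module.finrank ℝ P → (∀ w ∈ W, w ∈ G) →
      (∀ g ∈ G, ∃ w ∈ W, ∃ m : Fin q → ℤ, g = w + ∑ j, (m j : ℝ) • v j) →
      (∀ g ∈ G, ‖g‖ ≤ R → ∃ m, ‖g.2 - B₁ (intVec q m)‖ < ε) →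
      (∀ j, ∃ g ∈ G, ‖g.1‖ < ε ∧ ‖g.2 - B₁ (Pi.single j 1)‖ < ε) →
      ∃ (A : P →L[ℝ] F) (B : (Fin q → ℝ) →L[ℝ] F), ‖A‖ < η ∧ ‖B - B₁‖ < η ∧
        ∀ g, g ∈ G ↔ ∃ m, g.2 = A g.1 + B (intVec q m) := by
  obtain ⟨R, ε, hε, hε1, h3, hεη, hqη, hqc, hR1, h2R, hBR, hfin⟩ :=
    exists_lattice_radius B₁ hc hη
  refine ⟨R, ε, hε, fun G W v hWP hWG hGv hnear hgen => ?_⟩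
  have gap : ∀ g ∈ G, ‖g‖ ≤ R → ‖g.2‖ < ε ∨ c - ε < ‖g.2‖ := by
    intro g hg hgR
    obtain ⟨m, hm⟩ := hnear g hg hgR
    by_cases h0 : m = 0
    · left
      simpa [h0] using hm
    · right
      have h1 := hB₁ (intVec q m)
      have h2 := one_le_norm_intVec h0
      have h4 : ‖B₁ (intVec q m)‖ - ‖g.2‖ ≤ ‖g.2 - B₁ (intVec q m)‖ := by
        rw [norm_sub_rev]
        exact norm_sub_norm_le _ _
      nlinarith
  have hWsmall : ∀ w ∈ W, ‖w‖ ≤ R → ‖w.2‖ < ε := by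
    intro w hw hwR
    by_contra! hcon
    have hpos : 0 < ‖w.2‖ := hε.trans_le hcon
    have ht0 : 0 ≤ ε / ‖w.2‖ := by positivity
    have ht1 : ε / ‖w.2‖ ≤ 1 := (div_le_one hpos).mpr hcon
    have h1 : ‖((ε / ‖w.2‖) • w).2‖ = ε := by
      rw [Prod.smul_snd, norm_smul, Real.norm_of_nonneg ht0, div_mul_cancel₀ _ hpos.ne']
    have h2 : ‖(ε / ‖w.2‖) • w‖ ≤ R := by
      rw [norm_smul, Real.norm_of_nonneg ht0]
      exact (mul_le_of_le_one_left (norm_nonneg _) ht1).trans hwR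
    rcases gap _ (hWG _ (W.smul_mem _ hw)) h2 with h | h <;> rw [h1] at h <;> linarith
  have hWle : ∀ w ∈ W, ‖w.2‖ ≤ ε * ‖w‖ := by
    intro w hw
    rcases eq_or_ne w 0 with rfl | hne
    · simp
    have hpos : 0 < ‖w‖ := norm_pos_iff.mpr hne
    have h1 := hWsmall (‖w‖⁻¹ • w) (W.smul_mem _ hw)
      (by rw [norm_smul, norm_inv, norm_norm, inv_mul_cancel₀ hpos.ne']; exact hR1)
    rw [Prod.smul_snd, norm_smul, norm_inv, norm_norm, inv_mul_lt_iff₀ hpos] at h1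
    linarith
  obtain ⟨A, hAε, hA⟩ := exists_graph_of_norm_snd_le hWP hε hε1 hWle
  let T : P × F →ₗ[ℝ] F := LinearMap.snd ℝ P F - A.toLinearMap.comp (LinearMap.fst ℝ P F)
  have hT : ∀ g, T g = g.2 - A g.1 := fun g => rfl
  have hTG : ∀ g, g ∈ G ↔ ((0 : P), T g) ∈ G := by
    intro g
    have h1 : (g.1, A g.1) ∈ G := hWG _ ((hA _).mpr rfl)
    have h2 : g = (g.1, A g.1) + ((0 : P), T g) := by
      refine Prod.ext ?_ ?_ <;> simp [hT]
    conv_lhs => rw [h2]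
    exact G.add_mem_cancel_left h1
  let L : AddSubgroup F := G.comap (AddMonoidHom.inr P F)
  have hL : ∀ l, l ∈ L ↔ ((0 : P), l) ∈ G := fun l => Iff.rfl
  choose g hgG hg1 hg2 using hgen
  have hbL : ∀ j, T (g j) ∈ L := fun j => (hTG (g j)).mp (hgG j)
  obtain ⟨B, hB, hBB₁⟩ := exists_clm_near B₁ (b := fun j => T (g j)) (δ := 2 * ε) (by positivity)
    (by
      intro j
      have h1 : T (g j) - B₁ (Pi.single j 1) = ((g j).2 - B₁ (Pi.single j 1)) - A (g j).1 := by
        rw [hT]; abel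
      have h2 : ‖A (g j).1‖ ≤ ε * ‖(g j).1‖ := A.le_of_opNorm_le hAε _
      have h3 : ε * ‖(g j).1‖ ≤ ε := mul_le_of_le_one_right hε.le ((hg1 j).le.trans hε1.le)
      rw [h1]
      linarith [norm_sub_le ((g j).2 - B₁ (Pi.single j 1)) (A (g j).1), hg2 j])
  have hBB₁' : ‖B - B₁‖ ≤ 2 * q * ε := by linarith
  have hBlow : ∀ v, c / 2 * ‖v‖ ≤ ‖B v‖ := fun v =>
    le_trans (mul_le_mul_of_nonneg_right (by linarith) (norm_nonneg v))
      (le_norm_map_of_norm_sub_le hB₁ hBB₁' v)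
  have hBinj : Function.Injective B := by
    refine (injective_iff_map_eq_zero B).mpr fun v hv => ?_
    have h1 := hBlow v
    rw [hv, norm_zero] at h1
    exact norm_le_zero_iff.mp (by nlinarith [norm_nonneg v])
  have hBL : ∀ m, B (intVec q m) ∈ L := by
    intro m
    rw [hB]
    refine L.sum_mem fun j _ => ?_
    rw [intVec_apply, Int.cast_smul_eq_zsmul]
    exact L.zsmul_mem (hbL j) _
  have hspan : ∀ l ∈ L, l ∈ Submodule.span ℝ (range fun j => T (v j)) := by
    intro l hl
    obtain ⟨w, hw, m, hm⟩ := hGv _ hl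
    have h1 : T ((0 : P), l) = l := by simp [hT]
    have h2 : T w = 0 := by rw [hT, (hA w).mp hw, sub_self]
    have h3 : l = ∑ j, (m j : ℝ) • T (v j) := by
      have := congrArg T hm
      rw [AddMonoidHom.inr_apply, h1, map_add, h2, zero_add, map_sum] at this
      simpa using this
    rw [h3]
    exact Submodule.sum_mem _ fun j _ =>
      Submodule.smul_mem _ _ (Submodule.subset_span (mem_range_self j))
  have hrange : LinearMap.range B.toLinearMap = Submodule.span ℝ (range fun j => T (v j)) := by
    refine Submodule.eq_of_le_of_finrank_le ?_ ?_
    · rintro _ ⟨x, rfl⟩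
      change B x ∈ _
      rw [hB]
      exact Submodule.sum_mem _ fun j _ => Submodule.smul_mem _ _ (hspan _ (hbL j))
    · rw [LinearMap.finrank_range_of_inj hBinj]
      simpa [Set.finrank] using finrank_range_le_card (R := ℝ) (fun j => T (v j))
  have hsmall : ∀ l ∈ L, ‖l‖ ≤ R → ‖l‖ < ε ∨ c - ε < ‖l‖ := fun l hl hlR =>
    gap _ hl (by simpa [Prod.norm_def] using hlR)
  have hzero : ∀ l ∈ L, ‖l‖ ≤ R → ‖l‖ ≤ c - ε → l = 0 := by
    intro l hl hlR hlc
    refine eq_zero_of_norm_gap (Λ := L) hε (fun l hl h => ?_) hl ?_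
    · rcases hsmall l hl (h.trans h2R) with h | h
      · exact h
      · linarith
    · rcases hsmall l hl hlR with h | h
      · exact h
      · linarith
  have hLB : ∀ l ∈ L, ∃ m, l = B (intVec q m) := by
    intro l hl
    obtain ⟨t, ht⟩ : l ∈ LinearMap.range B.toLinearMap := hrange ▸ hspan l hl
    replace ht : B t = l := ht
    let s : Fin q → ℝ := fun j => Int.fract (t j)
    let k : Fin q → ℤ := fun j => ⌊t j⌋
    have hsk : t = s + intVec q k := by
      ext j
      simp [s, k, Int.fract_add_floor]
    have hs : ‖s‖ ≤ 1 := by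
      refine (pi_norm_le_iff_of_nonneg zero_le_one).mpr fun j => ?_
      rw [Real.norm_of_nonneg (Int.fract_nonneg _)]
      exact (Int.fract_lt_one _).le
    have hsL : B s ∈ L := by
      have : B s = l - B (intVec q k) := by rw [← ht, hsk, map_add, add_sub_cancel_right]
      rw [this]
      exact L.sub_mem hl (hBL k)
    have hBn : ‖B‖ ≤ ‖B₁‖ + c / 2 := by
      have : B = (B - B₁) + B₁ := by abel
      calc ‖B‖ = ‖(B - B₁) + B₁‖ := by rw [← this]
        _ ≤ ‖B - B₁‖ + ‖B₁‖ := norm_add_le _ _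
        _ ≤ _ := by linarith
    have hBs : ‖B s‖ ≤ ‖B₁‖ + c / 2 := by
      refine (B.le_opNorm s).trans ((mul_le_of_le_one_right (norm_nonneg _) hs).trans hBn)
    obtain ⟨m, hm⟩ := hnear _ hsL (by simpa [Prod.norm_def] using hBs.trans (by linarith))
    replace hm : ‖B s - B₁ (intVec q m)‖ < ε := hm
    have hmn : ‖intVec q m‖ ≤ (R + 1) / c := by
      rw [le_div_iff₀ hc]
      have h1 : ‖B₁ (intVec q m)‖ - ‖B s‖ ≤ ‖B s - B₁ (intVec q m)‖ := by
        rw [norm_sub_rev]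
        exact norm_sub_norm_le _ _
      linarith [hB₁ (intVec q m)]
    have hdiff : ‖B s - B (intVec q m)‖ < ε + 2 * q * ε * ((R + 1) / c) := by
      have h1 : B s - B (intVec q m) = (B s - B₁ (intVec q m)) - (B - B₁) (intVec q m) := by
        rw [sub_apply]; abel
      have h2 : ‖(B - B₁) (intVec q m)‖ ≤ 2 * q * ε * ((R + 1) / c) :=
        ((B - B₁).le_of_opNorm_le hBB₁' _).trans
          (mul_le_mul_of_nonneg_left hmn (by positivity))
      rw [h1]
      linarith [norm_sub_le (B s - B₁ (intVec q m)) ((B - B₁) (intVec q m))]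
    have h0 := hzero _ (L.sub_mem hsL (hBL m)) (by linarith [norm_nonneg B₁]) (by linarith)
    refine ⟨m + k, ?_⟩
    rw [← ht, hsk, map_add, map_add, map_add, sub_eq_zero.mp h0]
  refine ⟨A, B, hAε.trans_lt hεη, hBB₁'.trans_lt hqη, fun g => ?_⟩
  rw [hTG]
  constructor
  · intro h
    obtain ⟨m, hm⟩ := hLB _ h
    exact ⟨m, by rw [← hm, hT]; abel⟩
  · rintro ⟨m, hm⟩
    have : T g = B (intVec q m) := by rw [hT, hm]; abel
    rw [this]
    exact hBL m

end Lattice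

section Chabauty

variable {n p q : ℕ}

/-- A closed subgroup topologically isomorphic to `ℝ^p × ℤ^q` is the image of `ℝ^p × ℤ^q` under an
injective linear map defined on `ℝ^p × ℝ^q`. -/
theorem exists_injective_linearMap_of_mem_stratum {Γ : ChabautyPoint n} (hΓ : Γ ∈ stratum n p q) :
    ∃ L : (Fin p → ℝ) × (Fin q → ℝ) →ₗ[ℝ] Euc n, Function.Injective L ∧
      ∀ g, g ∈ Γ.1 ↔ ∃ x m, g = L (x, intVec q m) := by
  obtain ⟨e, he, he'⟩ := hΓ
  let f : (Fin p → ℝ) × (Fin q → ℤ) →+ Euc n := Γ.1.subtype.comp e.symm.toAddMonoidHom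
  have hf : Continuous f := continuous_subtype_val.comp he'
  let f₁ : (Fin p → ℝ) →L[ℝ] Euc n :=
    (f.comp (AddMonoidHom.inl _ _)).toRealLinearMap
      (hf.comp (Continuous.prodMk_left 0))
  let L : (Fin p → ℝ) × (Fin q → ℝ) →ₗ[ℝ] Euc n :=
    f₁.toLinearMap.coprod (Fintype.linearCombination ℝ fun j => f (0, Pi.single j 1))
  have hL : ∀ x m, L (x, intVec q m) = f (x, m) := by
    intro x m
    have h1 : (x, m) = (x, (0 : Fin q → ℤ)) +
        ∑ j, m j • ((0 : Fin p → ℝ), (Pi.single j 1 : Fin q → ℤ)) := by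
      refine Prod.ext ?_ ?_
      · simp [Prod.fst_sum]
      · ext i
        simp [Prod.snd_sum, Finset.sum_apply, Pi.single_apply]
    rw [h1, map_add, map_sum]
    simp only [map_zsmul]
    simp [L, f₁, Fintype.linearCombination_apply, Int.cast_smul_eq_zsmul]
  have hnear : ∃ δ > 0, ∀ x m, ‖f (x, m)‖ < δ → ‖x‖ < 1 ∧ m = 0 := by
    have h1 : {y : (Fin p → ℝ) × (Fin q → ℤ) | ‖y.1‖ < 1 ∧ y.2 = 0} ∈ 𝓝 (e 0) := by
      rw [map_zero]
      refine IsOpen.mem_nhds ?_ (by simp)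
      exact (isOpen_lt continuous_fst.norm continuous_const).and
        ((isOpen_discrete {(0 : Fin q → ℤ)}).preimage continuous_snd)
    have h2 := he.continuousAt.preimage_mem_nhds h1
    obtain ⟨δ, hδ, hball⟩ := Metric.mem_nhds_iff.mp h2
    refine ⟨δ, hδ, fun x m hxm => ?_⟩
    have h3 : e.symm (x, m) ∈ Metric.ball (0 : Γ.1) δ := by
      rw [mem_ball_zero_iff]
      exact hxm
    simpa using hball h3
  obtain ⟨δ, hδ, hfδ⟩ := hnear
  have hker : ∀ y, L y = 0 → ‖y.1‖ < 1 ∧ ‖y.2‖ < 1 := by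
    rintro ⟨a, b⟩ hab
    have hcont : Continuous fun y : Fin q → ℝ => L (0, y) := by
      have := LinearMap.continuous_of_finiteDimensional L
      fun_prop
    obtain ⟨r, hr, hrδ⟩ := Metric.continuous_iff.mp hcont 0 δ hδ
    obtain ⟨k, hk, m, hm⟩ := exists_pos_nat_smul_near_intVec b (lt_min hr one_pos)
    have h1 : f ((k : ℝ) • a, m) = - L (0, (k : ℝ) • b - intVec q m) := by
      rw [← hL, ← map_neg, ← sub_eq_zero, ← map_sub]
      have : (((k : ℝ) • a, intVec q m) - -((0 : Fin p → ℝ), (k : ℝ) • b - intVec q m)) =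
          (k : ℝ) • (a, b) := by
        refine Prod.ext ?_ ?_ <;> simp
      rw [this, map_smul, hab, smul_zero]
    have h2 := hrδ ((k : ℝ) • b - intVec q m)
      (by rw [dist_zero_right]; exact hm.trans_le (min_le_left _ _))
    have hz : ((0 : Fin p → ℝ), (0 : Fin q → ℝ)) = 0 := rfl
    rw [hz, map_zero, dist_zero_right] at h2
    obtain ⟨h3, rfl⟩ := hfδ _ _ (by rw [h1, norm_neg]; exact h2)
    rw [map_zero, sub_zero] at hm
    have hk1 : (1 : ℝ) ≤ k := by exact_mod_cast hk
    have h4 := hm.trans_le (min_le_right _ _)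
    rw [norm_smul, Real.norm_natCast] at h3 h4
    exact ⟨(le_mul_of_one_le_left (norm_nonneg _) hk1).trans_lt h3,
      (le_mul_of_one_le_left (norm_nonneg _) hk1).trans_lt h4⟩
  refine ⟨L, ?_, fun g => ⟨fun hg => ?_, ?_⟩⟩
  · refine (injective_iff_map_eq_zero L).mpr fun y hy => ?_
    by_contra hne
    have hpos : 0 < ‖y‖ := norm_pos_iff.mpr hne
    have h1 := hker (‖y‖⁻¹ • y) (by rw [map_smul, hy, smul_zero])
    have h2 : ‖‖y‖⁻¹ • y‖ < 1 := by
      rw [Prod.norm_def]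
      exact max_lt h1.1 h1.2
    rw [norm_smul, norm_inv, norm_norm, inv_mul_cancel₀ hpos.ne'] at h2
    exact lt_irrefl _ h2
  · refine ⟨(e ⟨g, hg⟩).1, (e ⟨g, hg⟩).2, ?_⟩
    rw [hL]
    simp [f]
  · rintro ⟨x, m, rfl⟩
    rw [hL]
    exact (e.symm (x, m)).2

variable {F : Type*} [NormedAddCommGroup F] [NormedSpace ℝ F]

theorem isOpen_setOf_exists_mem (Φ : Euc n ≃L[ℝ] (Fin p → ℝ) × F)
    {O : Set ((Fin p → ℝ) × F)} (hO : IsOpen O) :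
    IsOpen {Γ : ChabautyPoint n | ∃ g ∈ Γ.1, Φ g ∈ O} :=
  TopologicalSpace.isOpen_generateFrom_of_mem
    (Or.inr ⟨Φ ⁻¹' O, hO.preimage Φ.continuous, rfl⟩)

theorem isOpen_setOf_forall_notMem (Φ : Euc n ≃L[ℝ] (Fin p → ℝ) × F)
    {K : Set ((Fin p → ℝ) × F)} (hK : IsCompact K) :
    IsOpen {Γ : ChabautyPoint n | ∀ g ∈ Γ.1, Φ g ∉ K} := by
  refine TopologicalSpace.isOpen_generateFrom_of_mem
    (Or.inl ⟨Φ ⁻¹' K, Φ.toHomeomorph.isCompact_preimage.mpr hK, ?_⟩)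
  ext Γ
  simp only [mem_ofPred_eq, eq_empty_iff_forall_notMem, mem_inter_iff, not_and]
  rfl

/-- The subgroup of `ℝⁿ` that in the coordinates `Φ` is `{(x, A x + B m) : x ∈ ℝ^p, m ∈ ℤ^q}`. -/
def graphLattice (Φ : Euc n ≃L[ℝ] (Fin p → ℝ) × F) (A : (Fin p → ℝ) →L[ℝ] F)
    (B : (Fin q → ℝ) →L[ℝ] F) : AddSubgroup (Euc n) where
  carrier := {g | ∃ m, (Φ g).2 = A (Φ g).1 + B (intVec q m)}
  zero_mem' := ⟨0, by simp⟩
  add_mem' := by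
    rintro g h ⟨m, hm⟩ ⟨k, hk⟩
    refine ⟨m + k, ?_⟩
    simp only [map_add, Prod.fst_add, Prod.snd_add, hm, hk]
    abel
  neg_mem' := by
    rintro g ⟨m, hm⟩
    refine ⟨-m, ?_⟩
    simp only [map_neg, Prod.fst_neg, Prod.snd_neg, hm]
    abel

theorem mem_graphLattice {Φ : Euc n ≃L[ℝ] (Fin p → ℝ) × F} {A : (Fin p → ℝ) →L[ℝ] F}
    {B : (Fin q → ℝ) →L[ℝ] F} {g : Euc n} :
    g ∈ graphLattice Φ A B ↔ ∃ m, (Φ g).2 = A (Φ g).1 + B (intVec q m) := Iff.rfl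

theorem isClosedEmbedding_comp_intVec {B : (Fin q → ℝ) →L[ℝ] F} (hB : Function.Injective B) :
    IsClosedEmbedding fun m => B (intVec q m) :=
  (LinearMap.isClosedEmbedding_of_injective (f := B.toLinearMap)
    (LinearMap.ker_eq_bot.mpr hB)).comp (isClosedEmbedding_intVec q)

theorem isClosed_graphLattice (Φ : Euc n ≃L[ℝ] (Fin p → ℝ) × F) (A : (Fin p → ℝ) →L[ℝ] F)
    {B : (Fin q → ℝ) →L[ℝ] F} (hB : Function.Injective B) :
    IsClosed (graphLattice Φ A B : Set (Euc n)) := by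
  have hcont : Continuous fun g => (Φ g).2 - A (Φ g).1 := by fun_prop
  convert (isClosedEmbedding_comp_intVec hB).isClosed_range.preimage hcont using 1
  ext g
  simp only [SetLike.mem_coe, mem_graphLattice, mem_preimage, mem_range, eq_sub_iff_add_eq']
  exact exists_congr fun m => eq_comm

/-- `graphLattice` as a point of the Chabauty space. -/
def graphPoint (Φ : Euc n ≃L[ℝ] (Fin p → ℝ) × F) (A : (Fin p → ℝ) →L[ℝ] F)
    {B : (Fin q → ℝ) →L[ℝ] F} (hB : Function.Injective B) : ChabautyPoint n :=
  ⟨graphLattice Φ A B, isClosed_graphLattice Φ A hB⟩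

/-- Subgroups of the stratum close to `Φ⁻¹(ℝ^p × B₁(ℤ^q))` have the normal form
`{(x, A x + B m)}` in the coordinates `Φ`. -/
theorem exists_isOpen_normal_form_of_graph_zero [FiniteDimensional ℝ F]
    (Φ : Euc n ≃L[ℝ] (Fin p → ℝ) × F)
    (B₁ : (Fin q → ℝ) →L[ℝ] F) {c : ℝ} (hc : 0 < c) (hB₁ : ∀ v, c * ‖v‖ ≤ ‖B₁ v‖)
    {η : ℝ} (hη : 0 < η) :
    ∃ O : Set (ChabautyPoint n), IsOpen O ∧
      (∀ Γ : ChabautyPoint n, (∀ g, g ∈ Γ.1 ↔ ∃ m, (Φ g).2 = B₁ (intVec q m)) → Γ ∈ O) ∧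
      ∀ Γ ∈ O, Γ ∈ stratum n p q → ∃ (A : (Fin p → ℝ) →L[ℝ] F) (B : (Fin q → ℝ) →L[ℝ] F),
        ‖A‖ < η ∧ ‖B - B₁‖ < η ∧
          ∀ g, g ∈ Γ.1 ↔ ∃ m, (Φ g).2 = A (Φ g).1 + B (intVec q m) := by
  obtain ⟨R, ε, hε, hmain⟩ := exists_normal_form_of_near (P := Fin p → ℝ) B₁ hc hB₁ hη
  let K : Set ((Fin p → ℝ) × F) :=
    Metric.closedBall 0 R ∩ {g | ∀ m, ε ≤ ‖g.2 - B₁ (intVec q m)‖}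
  have hK : IsCompact K := by
    refine (isCompact_closedBall _ _).inter_right ?_
    rw [ofPred_forall]
    exact isClosed_iInter fun m => isClosed_le continuous_const (by fun_prop)
  let V : Fin q → Set ((Fin p → ℝ) × F) := fun j =>
    {g | ‖g.1‖ < ε ∧ ‖g.2 - B₁ (Pi.single j 1)‖ < ε}
  have hV : ∀ j, IsOpen (V j) := fun j =>
    (isOpen_lt continuous_fst.norm continuous_const).and
      (isOpen_lt (continuous_snd.sub continuous_const).norm continuous_const)
  refine ⟨{Γ | ∀ g ∈ Γ.1, Φ g ∉ K} ∩ ⋂ j, {Γ | ∃ g ∈ Γ.1, Φ g ∈ V j},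
    (isOpen_setOf_forall_notMem Φ hK).inter
      (isOpen_iInter_of_finite fun j => isOpen_setOf_exists_mem Φ (hV j)), ?_, ?_⟩
  · intro Γ hΓ
    refine ⟨fun g hg hgK => ?_, mem_iInter.mpr fun j => ?_⟩
    · obtain ⟨m, hm⟩ := (hΓ g).mp hg
      have := hgK.2 m
      rw [hm, sub_self, norm_zero] at this
      exact this.not_gt hε
    · refine ⟨Φ.symm (0, B₁ (Pi.single j 1)), (hΓ _).mpr ⟨Pi.single j 1, ?_⟩, ?_⟩
      · simp [intVec_single]
      · simp [V, hε]
  · rintro Γ ⟨hΓK, hΓV⟩ hΓ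
    obtain ⟨L, hLinj, hL⟩ := exists_injective_linearMap_of_mem_stratum hΓ
    let L' : (Fin p → ℝ) × (Fin q → ℝ) →ₗ[ℝ] (Fin p → ℝ) × F := Φ.toLinearMap.comp L
    have hL' : ∀ y, L' y = Φ (L y) := fun y => rfl
    let f : (Fin p → ℝ) →ₗ[ℝ] (Fin p → ℝ) × F := L'.comp (LinearMap.inl ℝ _ _)
    have hf : Function.Injective f :=
      Φ.injective.comp (hLinj.comp LinearMap.inl_injective)
    have hG : ∀ g, g ∈ Γ.1.map (Φ : Euc n →+ (Fin p → ℝ) × F) ↔ Φ.symm g ∈ Γ.1 := by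
      intro g
      constructor
      · rintro ⟨y, hy, rfl⟩
        simpa using hy
      · exact fun h => ⟨_, h, by simp⟩
    obtain ⟨A, B, hA, hB, hAB⟩ := hmain (Γ.1.map (Φ : Euc n →+ (Fin p → ℝ) × F))
      (LinearMap.range f) (fun j => L' (0, Pi.single j 1))
      (LinearMap.finrank_range_of_inj hf)
      (by
        rintro _ ⟨x, rfl⟩
        exact ⟨L (x, 0), (hL _).mpr ⟨x, 0, by simp⟩, rfl⟩)
      (by
        rintro _ ⟨y, hy, rfl⟩
        obtain ⟨x, m, rfl⟩ := (hL y).mp hy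
        refine ⟨f x, ⟨x, rfl⟩, m, ?_⟩
        have h1 : (x, intVec q m) = (x, 0) +
            ∑ j, (m j : ℝ) • ((0 : Fin p → ℝ), (Pi.single j 1 : Fin q → ℝ)) := by
          refine Prod.ext ?_ ?_
          · simp [Prod.fst_sum]
          · ext i
            simp [Prod.snd_sum, Finset.sum_apply, Pi.single_apply]
        change L' (x, intVec q m) = _
        rw [h1, map_add, map_sum]
        simp only [map_smul]
        rfl)
      (by
        rintro _ ⟨y, hy, rfl⟩ hR
        by_contra! hcon
        exact hΓK y hy ⟨by simpa using hR, hcon⟩)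
      (by
        intro j
        obtain ⟨y, hy, hyV⟩ := mem_iInter.mp hΓV j
        exact ⟨Φ y, ⟨y, hy, rfl⟩, hyV⟩)
    refine ⟨A, B, hA, hB, fun g => ?_⟩
    rw [← hAB, hG, Φ.symm_apply_apply]

theorem exists_isOpen_normal_form [FiniteDimensional ℝ F]
    (Φ : Euc n ≃L[ℝ] (Fin p → ℝ) × F)
    (A₁ : (Fin p → ℝ) →L[ℝ] F) (B₁ : (Fin q → ℝ) →L[ℝ] F) {c : ℝ} (hc : 0 < c)
    (hB₁ : ∀ v, c * ‖v‖ ≤ ‖B₁ v‖) {η : ℝ} (hη : 0 < η) :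
    ∃ O : Set (ChabautyPoint n), IsOpen O ∧
      (∀ Γ : ChabautyPoint n,
        (∀ g, g ∈ Γ.1 ↔ ∃ m, (Φ g).2 = A₁ (Φ g).1 + B₁ (intVec q m)) → Γ ∈ O) ∧
      ∀ Γ ∈ O, Γ ∈ stratum n p q → ∃ (A : (Fin p → ℝ) →L[ℝ] F) (B : (Fin q → ℝ) →L[ℝ] F),
        ‖A - A₁‖ < η ∧ ‖B - B₁‖ < η ∧
          ∀ g, g ∈ Γ.1 ↔ ∃ m, (Φ g).2 = A (Φ g).1 + B (intVec q m) := by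
  let Φ' : Euc n ≃L[ℝ] (Fin p → ℝ) × F := Φ.trans
    ((ContinuousLinearEquiv.refl ℝ (Fin p → ℝ)).skewProd (ContinuousLinearEquiv.refl ℝ F) (-A₁))
  have h1 : ∀ g, (Φ' g).1 = (Φ g).1 := fun g => rfl
  have h2 : ∀ g, (Φ' g).2 = (Φ g).2 - A₁ (Φ g).1 := fun g => (sub_eq_add_neg _ _).symm
  obtain ⟨O, hO, hmem, hform⟩ := exists_isOpen_normal_form_of_graph_zero Φ' B₁ hc hB₁ hη
  refine ⟨O, hO, fun Γ hΓ => hmem Γ fun g => ?_, fun Γ hΓO hΓ => ?_⟩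
  · rw [hΓ, h2]
    simp only [sub_eq_iff_eq_add']
  · obtain ⟨A, B, hA, hB, hAB⟩ := hform Γ hΓO hΓ
    refine ⟨A + A₁, B, by simpa using hA, hB, fun g => ?_⟩
    rw [hAB, h1, h2]
    refine exists_congr fun m => ?_
    rw [sub_eq_iff_eq_add', add_apply]
    constructor <;> intro h <;> rw [h] <;> abel

theorem graphLattice_mem_stratum (Φ : Euc n ≃L[ℝ] (Fin p → ℝ) × F) (A : (Fin p → ℝ) →L[ℝ] F)
    {B : (Fin q → ℝ) →L[ℝ] F} (hB : Function.Injective B) :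
    graphPoint Φ A hB ∈ stratum n p q := by
  have hmem : ∀ y : (Fin p → ℝ) × (Fin q → ℤ),
      Φ.symm (y.1, A y.1 + B (intVec q y.2)) ∈ graphLattice Φ A B := fun y => ⟨y.2, by simp⟩
  let f : (Fin p → ℝ) × (Fin q → ℤ) →+ graphLattice Φ A B :=
    { toFun := fun y => ⟨Φ.symm (y.1, A y.1 + B (intVec q y.2)), hmem y⟩
      map_zero' := by
        refine Subtype.ext ?_
        simp
      map_add' := fun y z => by
        refine Subtype.ext (Φ.injective ?_)
        refine Prod.ext ?_ ?_
        · simp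
        · simp only [Prod.fst_add, Prod.snd_add, map_add, ContinuousLinearEquiv.apply_symm_apply,
            AddSubgroup.coe_add]
          abel }
  have hf : ∀ y, Φ (f y) = (y.1, A y.1 + B (intVec q y.2)) := fun y => Φ.apply_symm_apply _
  have hBi := isClosedEmbedding_comp_intVec hB
  have hbij : Function.Bijective f := by
    constructor
    · intro y z hyz
      have h := congrArg (fun g : graphLattice Φ A B => Φ g) hyz
      simp only [hf, Prod.mk.injEq] at h
      refine Prod.ext h.1 (hBi.injective ?_)
      simpa [h.1] using h.2
    · rintro ⟨g, m, hm⟩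
      refine ⟨((Φ g).1, m), Subtype.ext (Φ.injective ?_)⟩
      rw [hf]
      exact Prod.ext rfl hm.symm
  let e := AddEquiv.ofBijective f hbij
  have he : ∀ g : graphLattice Φ A B,
      Φ g = ((e.symm g).1, A (e.symm g).1 + B (intVec q (e.symm g).2)) := by
    intro g
    rw [← hf]
    congr 2
    exact (e.apply_symm_apply g).symm
  refine ⟨e.symm, ?_, ?_⟩
  · have h1 : Continuous fun g : graphLattice Φ A B => (e.symm g).1 := by
      have : (fun g : graphLattice Φ A B => (e.symm g).1) = fun g => (Φ g.1).1 := by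
        ext1 g
        rw [he g]
      rw [this]
      fun_prop
    have h2 : Continuous fun g : graphLattice Φ A B => (e.symm g).2 := by
      rw [hBi.isInducing.continuous_iff]
      have : ((fun m => B (intVec q m)) ∘ fun g : graphLattice Φ A B => (e.symm g).2) =
          fun g => (Φ g.1).2 - A (Φ g.1).1 := by
        ext1 g
        rw [he g]
        simp
      rw [this]
      fun_prop
    exact h1.prodMk h2
  · have hi := (isClosedEmbedding_intVec q).continuous
    have : Continuous f := by
      refine Continuous.subtype_mk ?_ _
      fun_prop
    exact this

/-- If `B` varies in a family that is uniformly bounded below, the total space of the lattices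
`B(ℤ^q)` is closed. -/
theorem isClosed_setOf_mem_lattice {X : Type*} [TopologicalSpace X] {B : X → (Fin q → ℝ) →L[ℝ] F}
    (hBc : Continuous B) {c : ℝ} (hc : 0 < c) (hB : ∀ x v, c * ‖v‖ ≤ ‖B x v‖) :
    IsClosed {y : X × F | ∃ m, y.2 = B y.1 (intVec q m)} := by
  have h : {y : X × F | ∃ m, y.2 = B y.1 (intVec q m)} =
      ⋃ m, {y : X × F | y.2 = B y.1 (intVec q m)} := by
    ext y
    simp
  rw [h]
  refine LocallyFinite.isClosed_iUnion (fun y => ?_) fun m =>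
    isClosed_eq continuous_snd (by fun_prop)
  refine ⟨{z | ‖z.2‖ < ‖y.2‖ + 1}, (isOpen_lt (by fun_prop) continuous_const).mem_nhds ?_, ?_⟩
  · simp
  · refine (isCompact_closedBall (0 : Fin q → ℤ) ((‖y.2‖ + 1) / c)).finite_of_discrete.subset ?_
    rintro m ⟨z, hz', hz⟩
    simp only [mem_ofPred_eq] at hz hz'
    rw [mem_closedBall_zero_iff, ← norm_intVec, le_div_iff₀ hc]
    have := hB z.1 (intVec q m)
    rw [← hz'] at this
    linarith

theorem continuous_graphLattice {X : Type*} [TopologicalSpace X]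
    (Φ : Euc n ≃L[ℝ] (Fin p → ℝ) × F) {A : X → (Fin p → ℝ) →L[ℝ] F}
    {B : X → (Fin q → ℝ) →L[ℝ] F} (hA : Continuous A) (hBc : Continuous B) {c : ℝ} (hc : 0 < c)
    (hB : ∀ x v, c * ‖v‖ ≤ ‖B x v‖) (hBi : ∀ x, Function.Injective (B x)) :
    Continuous fun x => graphPoint Φ (A x) (hBi x) := by
  refine continuous_generateFrom_iff.mpr ?_
  rintro _ (⟨K, hK, rfl⟩ | ⟨U, hU, rfl⟩)
  · have hclosed : IsClosed {y : X × Euc n | y.2 ∈ graphLattice Φ (A y.1) (B y.1)} := by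
      have hcont : Continuous fun y : X × Euc n => (y.1, (Φ y.2).2 - A y.1 (Φ y.2).1) := by
        fun_prop
      convert (isClosed_setOf_mem_lattice hBc hc hB).preimage hcont using 1
      ext y
      simp only [mem_ofPred_eq, mem_graphLattice, mem_preimage, sub_eq_iff_eq_add']
    refine isOpen_iff_mem_nhds.mpr fun x hx => ?_
    have hx' : ∀ g ∈ K, g ∉ graphLattice Φ (A x) (B x) := fun g hgK hg =>
      (eq_empty_iff_forall_notMem.mp hx) g ⟨hg, hgK⟩
    have := hK.eventually_forall_of_forall_eventually
      (P := fun z g => g ∉ graphLattice Φ (A z) (B z)) (x₀ := x)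
      fun g hg => hclosed.isOpen_compl.mem_nhds (x := (x, g)) (hx' g hg)
    filter_upwards [this] with z hz
    exact eq_empty_iff_forall_notMem.mpr fun g hg => hz g hg.2 hg.1
  · have : (fun x => graphPoint Φ (A x) (hBi x)) ⁻¹' {Γ | ((Γ.1 : Set (Euc n)) ∩ U).Nonempty} =
        ⋃ y : (Fin p → ℝ) × (Fin q → ℤ),
          {x | Φ.symm (y.1, A x y.1 + B x (intVec q y.2)) ∈ U} := by
      ext x
      simp only [mem_preimage, mem_ofPred_eq, mem_iUnion]
      constructor
      · rintro ⟨g, ⟨m, hm⟩, hgU⟩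
        refine ⟨((Φ g).1, m), ?_⟩
        rwa [← hm, Prod.mk.eta, Φ.symm_apply_apply]
      · rintro ⟨y, hy⟩
        exact ⟨_, ⟨y.2, by simp⟩, hy⟩
    rw [this]
    exact isOpen_iUnion fun y => hU.preimage (by fun_prop)

/-- The lattice parameters of a subgroup are determined by the subgroup, once `B` is known up to
an error smaller than the minimal length of `B'`. -/
theorem graphLattice_injective {Φ : Euc n ≃L[ℝ] (Fin p → ℝ) × F} {A A' : (Fin p → ℝ) →L[ℝ] F}
    {B B' : (Fin q → ℝ) →L[ℝ] F} {c : ℝ} (hc : 0 < c) (hB' : ∀ v, c * ‖v‖ ≤ ‖B' v‖)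
    (hBB' : ‖B - B'‖ < c) (h : graphLattice Φ A B = graphLattice Φ A' B') : A = A' ∧ B = B' := by
  have hpt : ∀ x m, ∃ m', A x + B (intVec q m) = A' x + B' (intVec q m') := by
    intro x m
    have h1 : Φ.symm (x, A x + B (intVec q m)) ∈ graphLattice Φ A B := ⟨m, by simp⟩
    rw [h, mem_graphLattice] at h1
    simpa using h1
  have hnorm : ∀ m : Fin q → ℤ, ‖B' (intVec q m)‖ < c → m = 0 := by
    intro m hm
    by_contra hne
    nlinarith [hB' (intVec q m), one_le_norm_intVec hne]
  have hA : A = A' := by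
    ext1 x
    by_contra hne
    have hpos : 0 < ‖A x - A' x‖ := norm_pos_iff.mpr (sub_ne_zero.mpr hne)
    let t : ℝ := c / 2 / ‖A x - A' x‖
    have ht : 0 < t := by positivity
    obtain ⟨m, hm⟩ := hpt (t • x) 0
    have h1 : B' (intVec q m) = t • (A x - A' x) := by
      rw [map_zero, map_zero, add_zero, map_smul, map_smul] at hm
      rw [smul_sub, hm]
      abel
    have h2 : ‖t • (A x - A' x)‖ = c / 2 := by
      rw [norm_smul, Real.norm_of_nonneg ht.le, div_mul_cancel₀ _ hpos.ne']
    have h3 := hnorm m (by rw [h1, h2]; linarith)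
    rw [h3, map_zero, map_zero] at h1
    rw [← h1, norm_zero] at h2
    linarith
  refine ⟨hA, ?_⟩
  subst hA
  have hsingle : ∀ j, B (Pi.single j 1) = B' (Pi.single j 1) := by
    intro j
    obtain ⟨m, hm⟩ := hpt 0 (Pi.single j 1)
    rw [map_zero, zero_add, zero_add] at hm
    have h1 : B' (intVec q (m - Pi.single j 1)) = (B - B') (Pi.single j 1) := by
      rw [map_sub, map_sub, ← hm, intVec_single, sub_apply]
    have h2 : m - Pi.single j 1 = 0 := by
      refine hnorm _ ?_
      rw [h1]
      refine ((B - B').le_opNorm _).trans_lt ?_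
      rwa [Pi.norm_single, norm_one, mul_one]
    rw [h2, map_zero, map_zero, sub_apply] at h1
    exact sub_eq_zero.mp h1.symm
  ext1 v
  rw [map_eq_sum_smul_single B, map_eq_sum_smul_single B']
  simp only [hsingle]

/-- The chart around `Φ⁻¹(ℝ^p × B₀(ℤ^q))`: the parameters `(A, B)` with `B` close to `B₀` are
mapped homeomorphically onto an open subset of the stratum. -/
theorem exists_isOpenEmbedding_graphLattice [FiniteDimensional ℝ F]
    (Φ : Euc n ≃L[ℝ] (Fin p → ℝ) × F)
    {B₀ : (Fin q → ℝ) →L[ℝ] F} (hB₀ : Function.Injective B₀) :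
    ∃ (V : Set (((Fin p → ℝ) →L[ℝ] F) × ((Fin q → ℝ) →L[ℝ] F))) (ψ : V → stratum n p q),
      IsOpen V ∧ IsOpenEmbedding ψ ∧ (0, B₀) ∈ V ∧
        ∀ v : V, (ψ v).1.1 = graphLattice Φ v.1.1 v.1.2 := by
  obtain ⟨K, hK, hKB⟩ := LinearMap.exists_antilipschitzWith B₀.toLinearMap
    (LinearMap.ker_eq_bot.mpr hB₀)
  let c : ℝ := (K : ℝ)⁻¹
  have hc : 0 < c := inv_pos.mpr (by exact_mod_cast hK)
  have hB₀c : ∀ v, c * ‖v‖ ≤ ‖B₀ v‖ := by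
    intro v
    have h1 := hKB.le_mul_norm_sub v 0
    rw [map_zero, add_zero, add_zero, norm_neg, norm_neg] at h1
    exact inv_mul_le_iff₀ (by exact_mod_cast hK) |>.mpr h1
  let V : Set (((Fin p → ℝ) →L[ℝ] F) × ((Fin q → ℝ) →L[ℝ] F)) := {v | ‖v.2 - B₀‖ < c / 4}
  have hV : IsOpen V := isOpen_lt (by fun_prop) continuous_const
  have hc' : 0 < c - c / 4 := by linarith
  have hlow : ∀ (v : V) x, (c - c / 4) * ‖x‖ ≤ ‖v.1.2 x‖ := fun v x =>
    le_norm_map_of_norm_sub_le hB₀c (le_of_lt v.2) x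
  have hinj : ∀ v : V, Function.Injective v.1.2 := by
    intro v
    refine (injective_iff_map_eq_zero v.1.2).mpr fun x hx => ?_
    have h1 := hlow v x
    rw [hx, norm_zero] at h1
    exact norm_le_zero_iff.mp (by nlinarith [norm_nonneg x])
  let ψ : V → stratum n p q := fun v => ⟨_, graphLattice_mem_stratum Φ v.1.1 (hinj v)⟩
  have hψ : ∀ v : V, (ψ v).1.1 = graphLattice Φ v.1.1 v.1.2 := fun v => rfl
  refine ⟨V, ψ, hV, .of_continuous_injective_isOpenMap ?_ ?_ ?_, ?_, hψ⟩
  · exact (continuous_graphLattice Φ (continuous_fst.comp continuous_subtype_val)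
      (continuous_snd.comp continuous_subtype_val) hc' hlow hinj).subtype_mk _
  · intro v w hvw
    have h1 : ‖v.1.2 - w.1.2‖ < c - c / 4 := by
      have h2 := v.2
      have h3 := w.2
      simp only [V, mem_ofPred_eq] at h2 h3
      have h4 : v.1.2 - w.1.2 = (v.1.2 - B₀) - (w.1.2 - B₀) := by abel
      rw [h4]
      linarith [norm_sub_le (v.1.2 - B₀) (w.1.2 - B₀)]
    have h2 : graphLattice Φ v.1.1 v.1.2 = graphLattice Φ w.1.1 w.1.2 := by
      rw [← hψ, ← hψ, hvw]
    obtain ⟨h3, h4⟩ := graphLattice_injective hc' (hlow w) h1 h2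
    exact Subtype.ext (Prod.ext h3 h4)
  · refine IsOpenMap.of_nhds_le fun v => ?_
    intro S hS
    rw [mem_map, nhds_subtype, mem_comap] at hS
    obtain ⟨T, hT, hTS⟩ := hS
    obtain ⟨η, hη, hηT⟩ := Metric.mem_nhds_iff.mp (inter_mem hT (hV.mem_nhds v.2))
    obtain ⟨O, hO, hvO, hform⟩ := exists_isOpen_normal_form Φ v.1.1 v.1.2 hc' (hlow v) hη
    refine mem_of_superset ((hO.preimage continuous_subtype_val).mem_nhds
      (hvO (ψ v).1 fun g => Iff.rfl)) ?_
    rintro ⟨Γ, hΓ⟩ hΓO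
    obtain ⟨A, B, hA, hB, hAB⟩ := hform Γ hΓO hΓ
    have h1 : (A, B) ∈ T ∩ V := hηT (by
      rw [Metric.mem_ball, dist_eq_norm, Prod.norm_def]
      exact max_lt hA hB)
    have h2 : ψ ⟨(A, B), h1.2⟩ ∈ S := hTS h1.1
    convert h2 using 1
    refine Subtype.ext (Subtype.ext (AddSubgroup.ext fun g => ?_))
    exact hAB g
  · simp only [V, mem_ofPred_eq, sub_self, norm_zero]
    positivity

/-- Coordinates on `ℝⁿ` adapted to an injective linear map defined on `ℝ^p × ℝ^q`. -/
theorem exists_adapted_coordinates {L : (Fin p → ℝ) × (Fin q → ℝ) →ₗ[ℝ] Euc n}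
    (hL : Function.Injective L) :
    ∃ (F : Submodule ℝ (Euc n)) (Φ : Euc n ≃L[ℝ] (Fin p → ℝ) × F) (B : (Fin q → ℝ) →L[ℝ] F),
      Function.Injective B ∧ ∀ x y, Φ (L (x, y)) = (x, B y) := by
  obtain ⟨r, hr⟩ := L.exists_leftInverse_of_injective (LinearMap.ker_eq_bot.mpr hL)
  have hr' : ∀ y, r (L y) = y := fun y => LinearMap.congr_fun hr y
  let π : Euc n →ₗ[ℝ] (Fin p → ℝ) := (LinearMap.fst ℝ _ _).comp r
  have hπ : ∀ x y, π (L (x, y)) = x := fun x y => by simp [π, hr']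
  let F := LinearMap.ker π
  let s : Euc n →ₗ[ℝ] F := (LinearMap.id - (L.comp (LinearMap.inl ℝ _ _)).comp π).codRestrict F
    fun g => by simp [F, hπ]
  have hs : ∀ g, (s g : Euc n) = g - L (π g, 0) := fun g => rfl
  let Φ : Euc n ≃ₗ[ℝ] (Fin p → ℝ) × F := LinearEquiv.ofBijective (π.prod s) (by
    constructor
    · refine (injective_iff_map_eq_zero _).mpr fun g hg => ?_
      obtain ⟨h1, h2⟩ := Prod.ext_iff.mp hg
      have h3 := congrArg Subtype.val h2
      change π g = 0 at h1
      change g - L (π g, 0) = 0 at h3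
      have hz : ((0 : Fin p → ℝ), (0 : Fin q → ℝ)) = 0 := rfl
      rwa [h1, hz, map_zero, sub_zero] at h3
    · rintro ⟨x, f, hf⟩
      have h1 : π (L (x, 0) + f) = x := by
        rw [map_add, hπ, LinearMap.mem_ker.mp hf, add_zero]
      refine ⟨L (x, 0) + f, Prod.ext h1 (Subtype.ext ?_)⟩
      change L (x, 0) + f - L (π (L (x, 0) + f), 0) = f
      rw [h1, add_sub_cancel_left])
  let B : (Fin q → ℝ) →ₗ[ℝ] F := (L.comp (LinearMap.inr ℝ _ _)).codRestrict F
    fun y => by simp [F, hπ]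
  refine ⟨F, Φ.toContinuousLinearEquiv, LinearMap.toContinuousLinearMap B, ?_, fun x y => ?_⟩
  · intro y z hyz
    have h1 : L (0, y) = L (0, z) := congrArg Subtype.val hyz
    exact (Prod.ext_iff.mp (hL h1)).2
  · refine Prod.ext (hπ x y) (Subtype.ext ?_)
    change L (x, y) - L (π (L (x, y)), 0) = L (0, y)
    rw [hπ, ← map_sub]
    congr 1
    simp

theorem finrank_parameters [FiniteDimensional ℝ F]
    (Φ : Euc n ≃L[ℝ] (Fin p → ℝ) × F) :
    Module.finrank ℝ (((Fin p → ℝ) →L[ℝ] F) × ((Fin q → ℝ) →L[ℝ] F)) = (p + q) * (n - p) := by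
  have hF : Module.finrank ℝ F = n - p := by
    have := Φ.toLinearEquiv.finrank_eq
    rw [finrank_euclideanSpace_fin, Module.finrank_prod, Module.finrank_fin_fun] at this
    omega
  rw [Module.finrank_prod, ← LinearEquiv.finrank_eq LinearMap.toContinuousLinearMap,
    ← LinearEquiv.finrank_eq LinearMap.toContinuousLinearMap, Module.finrank_linearMap,
    Module.finrank_linearMap, Module.finrank_fin_fun, Module.finrank_fin_fun, hF, add_mul]

end Chabauty

/-- The stratum 𝒞^{(p,q)} is a topological manifold of dimension (p+q)(n-p): every point has an
open neighborhood homeomorphic to an open subset of ℝ^{(p+q)(n-p)}. -/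
theorem stratum_is_manifold (n p q : ℕ) (hpq : p + q ≤ n) (x : stratum n p q) :
    ∃ U : Set (stratum n p q), IsOpen U ∧ x ∈ U ∧
      ∃ V : Set (EuclideanSpace ℝ (Fin ((p + q) * (n - p)))), IsOpen V ∧
        Nonempty (U ≃ₜ V) := by
  obtain ⟨L, hL, hxL⟩ := exists_injective_linearMap_of_mem_stratum x.2
  obtain ⟨F, Φ, B, hB, hΦ⟩ := exists_adapted_coordinates hL
  obtain ⟨V, ψ, hV, hψ, hV0, hψV⟩ := exists_isOpenEmbedding_graphLattice Φ hB
  let e : (((Fin p → ℝ) →L[ℝ] F) × ((Fin q → ℝ) →L[ℝ] F)) ≃L[ℝ]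
      EuclideanSpace ℝ (Fin ((p + q) * (n - p))) :=
    ContinuousLinearEquiv.ofFinrankEq (by
      rw [finrank_parameters Φ, finrank_euclideanSpace_fin])
  refine ⟨range ψ, hψ.isOpen_range, ⟨⟨(0, B), hV0⟩, ?_⟩, e '' V,
    e.toHomeomorph.isOpenMap V hV,
    ⟨hψ.isEmbedding.toHomeomorph.symm.trans (e.toHomeomorph.image V)⟩⟩
  refine Subtype.ext (Subtype.ext (AddSubgroup.ext fun g => ?_))
  rw [hψV, mem_graphLattice, hxL]
  constructor
  · rintro ⟨m, hm⟩
    refine ⟨(Φ g).1, m, Φ.injective ?_⟩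
    rw [hΦ]
    exact Prod.ext rfl (by simpa using hm)
  · rintro ⟨y, m, rfl⟩
    exact ⟨m, by simp [hΦ]⟩
end
end

section
/- The set 𝒞₁ of closed subgroups of ℝ² with covolume 1 (i.e., the closure in the Chabauty topology of the set of unit-covolume lattices) is homeomorphic to the set 𝒞¹ of closed subgroups of ℝ² whose shortest nonzero vector has norm 1, via the map sending Γ ∈ 𝒞¹ to the unique rescaling tΓ of unit covolume. -/
open scoped Pointwise

noncomputable section

/-- A lattice in ℝ²: a discrete subgroup spanning ℝ² (equivalently, isomorphic to ℤ²). -/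
def IsLattice (Γ : AddSubgroup (Euc 2)) : Prop :=
  DiscreteTopology Γ ∧ Submodule.span ℝ (Γ : Set (Euc 2)) = ⊤

/-- Γ has covolume one: it is generated by two vectors with determinant ±1. -/
def UnitCovolume (Γ : AddSubgroup (Euc 2)) : Prop :=
  ∃ v w : Euc 2, AddSubgroup.closure {v, w} = Γ ∧ |v 0 * w 1 - v 1 * w 0| = 1

/-- 𝒞₁ : the closure of the set of unit-covolume lattices in the Chabauty space of ℝ². -/
def covolOne : Set (ChabautyPoint 2) :=
  closure {Γ : ChabautyPoint 2 | IsLattice Γ.1 ∧ UnitCovolume Γ.1}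

/-- 𝒞¹ : the set of closed subgroups of ℝ² whose shortest nonzero vector has norm 1. -/
def normOne : Set (ChabautyPoint 2) :=
  {Γ : ChabautyPoint 2 | ∃ x ∈ Γ.1, ‖x‖ = 1 ∧ ∀ y ∈ Γ.1, y ≠ 0 → 1 ≤ ‖y‖}

open Filter Topology

/-! ### The Chabauty topology -/

instance chabautyPoint_t2Space (n : ℕ) : T2Space (ChabautyPoint n) := by
  have separate : ∀ (Γ Δ : ChabautyPoint n) (x : Euc n), x ∈ Γ.1 → x ∉ Δ.1 →
      ∃ U V : Set (ChabautyPoint n), IsOpen U ∧ IsOpen V ∧ Γ ∈ U ∧ Δ ∈ V ∧ Disjoint U V := by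
    intro Γ Δ x hx hx'
    obtain ⟨ε, hε, hball⟩ := Metric.nhds_basis_closedBall.mem_iff.1
      (Δ.2.isOpen_compl.mem_nhds hx')
    refine ⟨{Λ | ((Λ.1 : Set (Euc n)) ∩ Metric.ball x ε).Nonempty},
      {Λ | ((Λ.1 : Set (Euc n)) ∩ Metric.closedBall x ε) = ∅},
      .basic _ (.inr ⟨_, Metric.isOpen_ball, rfl⟩),
      .basic _ (.inl ⟨_, isCompact_closedBall x ε, rfl⟩),
      ⟨x, hx, Metric.mem_ball_self hε⟩, ?_, ?_⟩
    · exact Set.eq_empty_of_forall_notMem fun y hy => hball hy.2 hy.1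
    · rw [Set.disjoint_left]
      rintro Λ ⟨y, hy, hyx⟩ h
      exact Set.eq_empty_iff_forall_notMem.1 h y ⟨hy, Metric.ball_subset_closedBall hyx⟩
  refine ⟨fun Γ Δ hne => ?_⟩
  by_cases hsub : Γ.1 ≤ Δ.1
  · have : ¬ Δ.1 ≤ Γ.1 := fun h => hne (Subtype.ext (le_antisymm hsub h))
    obtain ⟨x, hx, hx'⟩ := SetLike.not_le_iff_exists.1 this
    obtain ⟨U, V, hU, hV, h1, h2, h3⟩ := separate Δ Γ x hx hx'
    exact ⟨V, U, hV, hU, h2, h1, h3.symm⟩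
  · obtain ⟨x, hx, hx'⟩ := SetLike.not_le_iff_exists.1 hsub
    exact separate Γ Δ x hx hx'

/-- A family of closed subgroups is continuous as soon as its total graph is closed and each member
of a group is approximated by members of the nearby groups. -/
theorem continuous_chabauty_of_isClosed_graph {P : Type*} [TopologicalSpace P] {n : ℕ}
    (f : P → ChabautyPoint n) (hgraph : IsClosed {q : P × Euc n | q.2 ∈ (f q.1).1})
    (happrox : ∀ p, ∀ x ∈ (f p).1, ∀ ε > 0, ∀ᶠ q in 𝓝 p, ∃ y ∈ (f q).1, dist y x < ε) :
    Continuous f := by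
  refine continuous_generateFrom_iff.2 ?_
  rintro S (⟨K, hK, rfl⟩ | ⟨U, hU, rfl⟩)
  · have : CompactSpace K := isCompact_iff_compactSpace.1 hK
    have hcl : IsClosed {q : P × K | (q.2 : Euc n) ∈ (f q.1).1} :=
      hgraph.preimage (by fun_prop : Continuous fun q : P × K => (q.1, (q.2 : Euc n)))
    convert (isClosedMap_fst_of_compactSpace _ hcl).isOpen_compl using 1
    ext p
    simp [Set.eq_empty_iff_forall_notMem, imp_not_comm]
  · refine isOpen_iff_mem_nhds.2 ?_
    rintro p ⟨x, hx, hxU⟩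
    obtain ⟨ε, hε, hball⟩ := Metric.isOpen_iff.1 hU x hxU
    filter_upwards [happrox p x hx ε hε] with q hq
    obtain ⟨y, hy, hyx⟩ := hq
    exact ⟨y, hy, hball hyx⟩

/-- Two quotient maps with the same fibres have homeomorphic targets. -/
theorem exists_homeomorph_of_isQuotientMap {P A B : Type*} [TopologicalSpace P]
    [TopologicalSpace A] [TopologicalSpace B] {f : P → A} {g : P → B}
    (hf : IsQuotientMap f) (hg : IsQuotientMap g) (h : ∀ p q, f p = f q ↔ g p = g q) :
    ∃ Φ : A ≃ₜ B, ∀ p, Φ (f p) = g p := by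
  let F : C(P, A) := ⟨f, hf.continuous⟩
  let G : C(P, B) := ⟨g, hg.continuous⟩
  have hF : IsQuotientMap F := hf
  have hG : IsQuotientMap G := hg
  let φ := hF.lift G fun p q hpq => (h p q).1 hpq
  let ψ := hG.lift F fun p q hpq => (h p q).2 hpq
  have hφ : ∀ p, φ (f p) = g p := fun p =>
    DFunLike.congr_fun (hF.lift_comp G fun p q hpq => (h p q).1 hpq) p
  have hψ : ∀ p, ψ (g p) = f p := fun p =>
    DFunLike.congr_fun (hG.lift_comp F fun p q hpq => (h p q).2 hpq) p
  refine ⟨⟨⟨φ, ψ, ?_, ?_⟩, φ.continuous, ψ.continuous⟩, hφ⟩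
  · intro a
    obtain ⟨p, rfl⟩ := hf.surjective a
    rw [hφ, hψ]
  · intro b
    obtain ⟨p, rfl⟩ := hg.surjective b
    rw [hψ, hφ]

/-! ### Planar subgroups in an orthonormal frame -/

/-- The component of `x` along the unit vector `v`. -/
def along (v x : Euc 2) : ℝ := v 0 * x 0 + v 1 * x 1

/-- The component of `x` along the quarter turn of the unit vector `v`, that is, the determinant
of `v` and `x`. -/
def across (v x : Euc 2) : ℝ := v 0 * x 1 - v 1 * x 0

/-- The quarter turn in the plane. -/
def quarterTurn (v : Euc 2) : Euc 2 := !₂[-v 1, v 0]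

theorem norm_sq_plane (x : Euc 2) : ‖x‖ ^ 2 = x 0 ^ 2 + x 1 ^ 2 := by
  simp [EuclideanSpace.norm_sq_eq]

section Frame

variable {v : Euc 2}

theorem sq_add_sq_of_norm_eq_one (hv : ‖v‖ = 1) : v 0 ^ 2 + v 1 ^ 2 = 1 := by
  rw [← norm_sq_plane, hv, one_pow]

theorem norm_sq_eq_along_across (hv : ‖v‖ = 1) (x : Euc 2) :
    ‖x‖ ^ 2 = along v x ^ 2 + across v x ^ 2 := by
  have h := sq_add_sq_of_norm_eq_one hv
  rw [norm_sq_plane, along, across]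
  linear_combination -(x 0 ^ 2 + x 1 ^ 2) * h

theorem along_smul_add_quarterTurn (hv : ‖v‖ = 1) (c d : ℝ) :
    along v (c • v + d • quarterTurn v) = c := by
  have h := sq_add_sq_of_norm_eq_one hv
  simp [along, quarterTurn]
  linear_combination c * h

theorem across_smul_add_quarterTurn (hv : ‖v‖ = 1) (c d : ℝ) :
    across v (c • v + d • quarterTurn v) = d := by
  have h := sq_add_sq_of_norm_eq_one hv
  simp [across, quarterTurn]
  linear_combination d * h

theorem eq_smul_add_quarterTurn_iff (hv : ‖v‖ = 1) {c d : ℝ} {x : Euc 2} :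
    c • v + d • quarterTurn v = x ↔ along v x = c ∧ across v x = d := by
  constructor
  · rintro rfl
    exact ⟨along_smul_add_quarterTurn hv c d, across_smul_add_quarterTurn hv c d⟩
  · rintro ⟨rfl, rfl⟩
    have h := sq_add_sq_of_norm_eq_one hv
    ext i
    fin_cases i
    · simp [along, across, quarterTurn]
      linear_combination x 0 * h
    · simp [along, across, quarterTurn]
      linear_combination x 1 * h

end Frame

theorem along_sub (v x y : Euc 2) : along v (x - y) = along v x - along v y := by
  simp [along]; ring

theorem across_sub (v x y : Euc 2) : across v (x - y) = across v x - across v y := by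
  simp [across]; ring

theorem along_zsmul (v x : Euc 2) (n : ℤ) : along v (n • x) = n * along v x := by
  simp [along]; ring

theorem across_zsmul (v x : Euc 2) (n : ℤ) : across v (n • x) = n * across v x := by
  simp [across]; ring

theorem along_self {v : Euc 2} (hv : ‖v‖ = 1) : along v v = 1 := by
  rw [along, ← sq_add_sq_of_norm_eq_one hv]; ring

theorem across_self (v : Euc 2) : across v v = 0 := by
  rw [across]; ring

theorem across_smul_smul (c d : ℝ) (v w : Euc 2) :
    across (c • v) (d • w) = c * d * across v w := by
  simp [across]; ring

@[fun_prop]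
theorem Continuous.along {P : Type*} [TopologicalSpace P] {f g : P → Euc 2}
    (hf : Continuous f) (hg : Continuous g) : Continuous fun p => along (f p) (g p) := by
  unfold _root_.along; fun_prop

@[fun_prop]
theorem Continuous.across {P : Type*} [TopologicalSpace P] {f g : P → Euc 2}
    (hf : Continuous f) (hg : Continuous g) : Continuous fun p => across (f p) (g p) := by
  unfold _root_.across; fun_prop

@[fun_prop]
theorem continuous_quarterTurn : Continuous quarterTurn := by
  unfold quarterTurn; fun_prop

/-- Two vectors with nonzero determinant span the plane. -/
theorem span_eq_top_of_across_ne_zero {s : Set (Euc 2)} {v w : Euc 2} (hv : v ∈ s) (hw : w ∈ s)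
    (h : across v w ≠ 0) : Submodule.span ℝ s = ⊤ := by
  refine eq_top_iff.2 fun x _ => ?_
  have : x = (across x w / across v w) • v + (across v x / across v w) • w := by
    ext i
    fin_cases i <;> simp <;> field_simp <;> simp [across] <;> ring
  rw [this]
  exact add_mem (Submodule.smul_mem _ _ (Submodule.subset_span hv))
    (Submodule.smul_mem _ _ (Submodule.subset_span hw))

/-- A subgroup whose nonzero members are bounded away from zero is discrete. -/
theorem discreteTopology_of_le_norm {H : AddSubgroup (Euc 2)} {ε : ℝ} (hε : 0 < ε)
    (h : ∀ y ∈ H, y ≠ 0 → ε ≤ ‖y‖) : DiscreteTopology H := by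
  refine discreteTopology_of_isOpen_singleton_zero ?_
  suffices hball : ({0} : Set H) = Metric.ball 0 ε from hball ▸ Metric.isOpen_ball
  refine Set.ext fun ⟨y, hy⟩ => ?_
  rw [Set.mem_singleton_iff, Metric.mem_ball, dist_zero_right]
  constructor
  · intro h0
    rw [h0]
    simpa using hε
  · intro hlt
    by_contra hne
    exact (h y hy fun h0 => hne (Subtype.ext h0)).not_gt hlt

/-- A pair of vectors in the subgroup generated by `v` and `w` has determinant zero or at least
that of `v` and `w`. -/
theorem abs_across_le_of_mem_closure {v w v' w' : Euc 2}
    (hv : v' ∈ AddSubgroup.closure {v, w}) (hw : w' ∈ AddSubgroup.closure {v, w})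
    (h : across v' w' ≠ 0) : |across v w| ≤ |across v' w'| := by
  obtain ⟨a, b, rfl⟩ := AddSubgroup.mem_closure_pair.1 hv
  obtain ⟨c, d, rfl⟩ := AddSubgroup.mem_closure_pair.1 hw
  have key : across (a • v + b • w) (c • v + d • w) = ((a * d - b * c : ℤ) : ℝ) * across v w := by
    simp [across]; ring
  rw [key] at h ⊢
  rw [abs_mul]
  have h1 : (a * d - b * c : ℤ) ≠ 0 := fun h0 => h (by rw [h0]; simp)
  have h2 : (1 : ℝ) ≤ |((a * d - b * c : ℤ) : ℝ)| := by
    rw [← Int.cast_abs]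
    exact_mod_cast Int.one_le_abs h1
  exact le_mul_of_one_le_left (abs_nonneg _) h2

/-- The covolume of a planar lattice does not depend on the basis. -/
theorem abs_across_eq_of_closure_eq {v w v' w' : Euc 2}
    (hcl : AddSubgroup.closure {v, w} = AddSubgroup.closure {v', w'})
    (h : across v w ≠ 0) (h' : across v' w' ≠ 0) : |across v w| = |across v' w'| := by
  have mem_left : ∀ a b : Euc 2, a ∈ AddSubgroup.closure {a, b} := fun a b =>
    AddSubgroup.subset_closure (by simp)
  have mem_right : ∀ a b : Euc 2, b ∈ AddSubgroup.closure {a, b} := fun a b =>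
    AddSubgroup.subset_closure (by simp)
  refine le_antisymm (abs_across_le_of_mem_closure ?_ ?_ h')
    (abs_across_le_of_mem_closure ?_ ?_ h)
  · rw [hcl]; exact mem_left _ _
  · rw [hcl]; exact mem_right _ _
  · rw [← hcl]; exact mem_left _ _
  · rw [← hcl]; exact mem_right _ _

/-! ### Reduced bases

A reduced basis of a subgroup with shortest vector `v` of norm one is `v` together with the vector
`a • v + r⁻² • quarterTurn v`, where `|a| ≤ 1 / 2`. The covolume is `r⁻²`, and the limit `r = 0`
corresponds to a second basis vector at infinity. -/

/-- The second vector of a reduced basis. -/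
def secondVector (v : Euc 2) (a r : ℝ) : Euc 2 := a • v + (r ^ 2)⁻¹ • quarterTurn v

/-- The subgroup with a given reduced basis. -/
def reducedGroup (v : Euc 2) (a r : ℝ) : AddSubgroup (Euc 2) :=
  if r = 0 then AddSubgroup.zmultiples v else AddSubgroup.closure {v, secondVector v a r}

/-- The rescaling by `r` of the subgroup with a given reduced basis, or its span if `r = 0`. -/
def rescaledGroup (v : Euc 2) (a r : ℝ) : AddSubgroup (Euc 2) :=
  if r = 0 then (Submodule.span ℝ {v}).toAddSubgroup
  else AddSubgroup.closure {r • v, r • secondVector v a r}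

section Reduced

variable {v x : Euc 2} {a r : ℝ}

theorem across_secondVector (hv : ‖v‖ = 1) : across v (secondVector v a r) = (r ^ 2)⁻¹ :=
  across_smul_add_quarterTurn hv _ _

theorem mem_reducedGroup_of_ne_zero (hv : ‖v‖ = 1) (hr : r ≠ 0) :
    x ∈ reducedGroup v a r ↔
      ∃ m n : ℤ, along v x = m + n * a ∧ across v x = n * (r ^ 2)⁻¹ := by
  rw [reducedGroup, if_neg hr, AddSubgroup.mem_closure_pair]
  refine exists_congr fun m => exists_congr fun n => ?_
  rw [← eq_smul_add_quarterTurn_iff hv]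
  have : m • v + n • secondVector v a r =
      ((m : ℝ) + n * a) • v + ((n : ℝ) * (r ^ 2)⁻¹) • quarterTurn v := by
    rw [secondVector]; module
  rw [this]

theorem mem_reducedGroup_zero (hv : ‖v‖ = 1) :
    x ∈ reducedGroup v a 0 ↔ ∃ m : ℤ, along v x = m ∧ across v x = 0 := by
  rw [reducedGroup, if_pos rfl, AddSubgroup.mem_zmultiples_iff]
  refine exists_congr fun m => ?_
  rw [← eq_smul_add_quarterTurn_iff hv, zero_smul, add_zero, Int.cast_smul_eq_zsmul]

theorem mem_rescaledGroup_zero (hv : ‖v‖ = 1) :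
    x ∈ rescaledGroup v a 0 ↔ across v x = 0 := by
  rw [rescaledGroup, if_pos rfl, Submodule.mem_toAddSubgroup, Submodule.mem_span_singleton]
  constructor
  · rintro ⟨c, rfl⟩
    simp [across]; ring
  · intro h
    refine ⟨along v x, ?_⟩
    have := (eq_smul_add_quarterTurn_iff hv).2 ⟨rfl, h⟩
    simpa using this

theorem mem_rescaledGroup_of_ne_zero (hr : r ≠ 0) :
    x ∈ rescaledGroup v a r ↔ ∃ y ∈ reducedGroup v a r, r • y = x := by
  simp only [rescaledGroup, reducedGroup, if_neg hr, AddSubgroup.mem_closure_pair]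
  constructor
  · rintro ⟨m, n, rfl⟩
    exact ⟨_, ⟨m, n, rfl⟩, by module⟩
  · rintro ⟨_, ⟨m, n, rfl⟩, rfl⟩
    exact ⟨m, n, by module⟩

theorem coe_rescaledGroup_of_ne_zero (hr : r ≠ 0) :
    (rescaledGroup v a r : Set (Euc 2)) = r • (reducedGroup v a r : Set (Euc 2)) := by
  ext x
  rw [SetLike.mem_coe, mem_rescaledGroup_of_ne_zero hr, Set.mem_smul_set]
  rfl

theorem mem_rescaledGroup_of_ne_zero' (hv : ‖v‖ = 1) (hr : r ≠ 0) :
    x ∈ rescaledGroup v a r ↔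
      ∃ m n : ℤ, along v x = r * (m + n * a) ∧ across v x = n * r⁻¹ := by
  rw [mem_rescaledGroup_of_ne_zero hr]
  constructor
  · rintro ⟨y, hy, rfl⟩
    obtain ⟨m, n, h1, h2⟩ := (mem_reducedGroup_of_ne_zero hv hr).1 hy
    refine ⟨m, n, ?_, ?_⟩
    · rw [← h1]; simp [along]; ring
    · have : across v (r • y) = r * across v y := by simp [across]; ring
      rw [this, h2]; field_simp
  · rintro ⟨m, n, h1, h2⟩
    refine ⟨r⁻¹ • x, (mem_reducedGroup_of_ne_zero hv hr).2 ⟨m, n, ?_, ?_⟩, by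
      rw [smul_inv_smul₀ hr]⟩
    · have : along v (r⁻¹ • x) = r⁻¹ * along v x := by simp [along]; ring
      rw [this, h1]; field_simp
    · have : across v (r⁻¹ • x) = r⁻¹ * across v x := by simp [across]; ring
      rw [this, h2]; field_simp

theorem left_mem_reducedGroup : v ∈ reducedGroup v a r := by
  unfold reducedGroup
  split_ifs
  · exact AddSubgroup.mem_zmultiples v
  · exact AddSubgroup.subset_closure (by simp)

theorem secondVector_mem_reducedGroup (hr : r ≠ 0) :
    secondVector v a r ∈ reducedGroup v a r := by
  rw [reducedGroup, if_neg hr]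
  exact AddSubgroup.subset_closure (by simp)

theorem smul_left_mem_rescaledGroup (hr : r ≠ 0) : r • v ∈ rescaledGroup v a r :=
  (mem_rescaledGroup_of_ne_zero hr).2 ⟨v, left_mem_reducedGroup, rfl⟩

/-- Membership in a reduced group as a closed condition on all the data. -/
theorem mem_reducedGroup_iff (hv : ‖v‖ = 1) :
    x ∈ reducedGroup v a r ↔
      r ^ 2 * across v x ∈ Set.range ((↑) : ℤ → ℝ) ∧
      along v x - a * (r ^ 2 * across v x) ∈ Set.range ((↑) : ℤ → ℝ) ∧
      (1 ≤ |r ^ 2 * across v x| ∨ across v x = 0) := by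
  by_cases hr : r = 0
  · subst hr
    rw [mem_reducedGroup_zero hv]
    constructor
    · rintro ⟨m, h1, h2⟩
      exact ⟨⟨0, by simp⟩, ⟨m, by simp [h1]⟩, .inr h2⟩
    · rintro ⟨-, ⟨m, hm⟩, h | h⟩
      · norm_num at h
      · exact ⟨m, by simpa using hm.symm, h⟩
  · rw [mem_reducedGroup_of_ne_zero hv hr]
    constructor
    · rintro ⟨m, n, h1, h2⟩
      have h3 : r ^ 2 * across v x = n := by rw [h2]; field_simp
      rw [h3, h1]
      refine ⟨⟨n, rfl⟩, ⟨m, by ring⟩, ?_⟩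
      rcases eq_or_ne n 0 with rfl | hn
      · right; simpa using h2
      · left
        rw [← Int.cast_abs]
        exact_mod_cast Int.one_le_abs hn
    · rintro ⟨⟨n, hn⟩, ⟨m, hm⟩, -⟩
      rw [← hn] at hm
      exact ⟨m, n, by linear_combination -hm, by rw [hn]; field_simp⟩

/-- Membership in a rescaled group as a closed condition on all the data. -/
theorem mem_rescaledGroup_iff (hv : ‖v‖ = 1) :
    x ∈ rescaledGroup v a r ↔
      r * across v x ∈ Set.range ((↑) : ℤ → ℝ) ∧
      (r = 0 ∨ (along v x - a * (r ^ 2 * across v x)) / r ∈ Set.range ((↑) : ℤ → ℝ)) ∧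
      (1 ≤ |r * across v x| ∨ across v x = 0) := by
  by_cases hr : r = 0
  · subst hr
    rw [mem_rescaledGroup_zero hv]
    constructor
    · intro h
      exact ⟨⟨0, by simp⟩, .inl rfl, .inr h⟩
    · rintro ⟨-, -, h | h⟩
      · norm_num at h
      · exact h
  · rw [mem_rescaledGroup_of_ne_zero' hv hr]
    constructor
    · rintro ⟨m, n, h1, h2⟩
      refine ⟨⟨n, by rw [h2]; field_simp⟩, .inr ⟨m, by rw [h1, h2]; field_simp; ring⟩, ?_⟩
      have h3 : r * across v x = n := by rw [h2]; field_simp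
      rw [h3]
      rcases eq_or_ne n 0 with rfl | hn
      · right; simpa using h2
      · left
        rw [← Int.cast_abs]
        exact_mod_cast Int.one_le_abs hn
    · rintro ⟨⟨n, hn⟩, h, -⟩
      obtain ⟨m, hm⟩ := h.resolve_left hr
      refine ⟨m, n, ?_, by rw [hn]; field_simp⟩
      rw [hm, hn]; field_simp; ring

/-- The nonzero members of a reduced group have norm at least one. -/
theorem one_le_norm_of_mem_reducedGroup (hv : ‖v‖ = 1) (ha : |a| ≤ 1 / 2)
    (har : r ^ 4 * (1 - a ^ 2) ≤ 1) (hx : x ∈ reducedGroup v a r) (hx0 : x ≠ 0) : 1 ≤ ‖x‖ := by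
  have hpos : 0 < ‖x‖ ^ 2 := by positivity
  have hsq := norm_sq_eq_along_across hv x
  refine (one_le_sq_iff₀ (norm_nonneg x)).1 ?_
  rw [hsq] at hpos ⊢
  by_cases hr : r = 0
  · subst hr
    obtain ⟨m, h1, h2⟩ := (mem_reducedGroup_zero hv).1 hx
    rw [h1, h2] at hpos ⊢
    have : 0 < m ^ 2 := by
      have : (0 : ℝ) < (m : ℝ) ^ 2 := by simpa using hpos
      exact_mod_cast this
    have : (1 : ℝ) ≤ (m : ℝ) ^ 2 := by exact_mod_cast this
    simpa using this
  · obtain ⟨m, n, h1, h2⟩ := (mem_reducedGroup_of_ne_zero hv hr).1 hx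
    rw [h1, h2] at hpos ⊢
    have hb : 1 - a ^ 2 ≤ ((r ^ 2)⁻¹) ^ 2 := by
      have : ((r ^ 2)⁻¹) ^ 2 = 1 / r ^ 4 := by field_simp
      rw [this, le_div_iff₀ (by positivity)]
      linarith
    obtain ⟨ha1, ha2⟩ := abs_le.1 ha
    have hmn : 1 ≤ m ^ 2 - |m * n| + n ^ 2 := by
      have hne : ¬ (m = 0 ∧ n = 0) := by
        rintro ⟨rfl, rfl⟩
        simp at hpos
      have : 0 < m ^ 2 - |m * n| + n ^ 2 := by
        have h4 : 0 < m ^ 2 + n ^ 2 := by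
          by_contra hle
          have hm : m ^ 2 = 0 := by nlinarith [sq_nonneg m, sq_nonneg n]
          have hn : n ^ 2 = 0 := by nlinarith [sq_nonneg m, sq_nonneg n]
          exact hne ⟨pow_eq_zero_iff two_ne_zero |>.1 hm, pow_eq_zero_iff two_ne_zero |>.1 hn⟩
        rcases abs_cases (m * n) with ⟨h, -⟩ | ⟨h, -⟩ <;> rw [h] <;>
          nlinarith [sq_nonneg (m - n), sq_nonneg (m + n)]
      exact this
    have hmn' : (1 : ℝ) ≤ m ^ 2 - |(m : ℝ) * n| + n ^ 2 := by exact_mod_cast hmn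
    have hcross : -|(m : ℝ) * n| ≤ 2 * a * (m * n) := by
      have : |2 * a * ((m : ℝ) * n)| ≤ |(m : ℝ) * n| := by
        rw [abs_mul]
        refine mul_le_of_le_one_left (abs_nonneg _) ?_
        rw [abs_le]
        constructor <;> linarith
      exact (abs_le.1 this).1
    nlinarith [mul_le_mul_of_nonneg_left hb (sq_nonneg (n : ℝ))]

/-- The nonzero members of a rescaled group have norm at least the scale. -/
theorem le_norm_of_mem_rescaledGroup (hv : ‖v‖ = 1) (ha : |a| ≤ 1 / 2) (hr : 0 < r)
    (har : r ^ 4 * (1 - a ^ 2) ≤ 1) (hx : x ∈ rescaledGroup v a r) (hx0 : x ≠ 0) : r ≤ ‖x‖ := by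
  obtain ⟨y, hy, rfl⟩ := (mem_rescaledGroup_of_ne_zero hr.ne').1 hx
  rw [norm_smul, Real.norm_of_nonneg hr.le]
  exact le_mul_of_one_le_right hr.le (one_le_norm_of_mem_reducedGroup hv ha har hy
    fun h => hx0 (by rw [h, smul_zero]))

theorem isLattice_reducedGroup (hv : ‖v‖ = 1) (ha : |a| ≤ 1 / 2) (hr : r ≠ 0)
    (har : r ^ 4 * (1 - a ^ 2) ≤ 1) : IsLattice (reducedGroup v a r) := by
  refine ⟨discreteTopology_of_le_norm one_pos
    fun y hy hy0 => one_le_norm_of_mem_reducedGroup hv ha har hy hy0,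
    span_eq_top_of_across_ne_zero left_mem_reducedGroup (secondVector_mem_reducedGroup hr) ?_⟩
  rw [across_secondVector hv]
  positivity

theorem across_smul_secondVector (hv : ‖v‖ = 1) (hr : r ≠ 0) :
    across (r • v) (r • secondVector v a r) = 1 := by
  rw [across_smul_smul, across_secondVector hv]
  field_simp

theorem isLattice_rescaledGroup (hv : ‖v‖ = 1) (ha : |a| ≤ 1 / 2) (hr : 0 < r)
    (har : r ^ 4 * (1 - a ^ 2) ≤ 1) : IsLattice (rescaledGroup v a r) := by
  refine ⟨discreteTopology_of_le_norm hr
    fun y hy hy0 => le_norm_of_mem_rescaledGroup hv ha hr har hy hy0,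
    span_eq_top_of_across_ne_zero (smul_left_mem_rescaledGroup hr.ne')
      ((mem_rescaledGroup_of_ne_zero hr.ne').2
        ⟨_, secondVector_mem_reducedGroup hr.ne', rfl⟩) ?_⟩
  rw [across_smul_secondVector hv hr.ne']
  exact one_ne_zero

theorem unitCovolume_rescaledGroup (hv : ‖v‖ = 1) (hr : r ≠ 0) :
    UnitCovolume (rescaledGroup v a r) := by
  refine ⟨r • v, r • secondVector v a r, by rw [rescaledGroup, if_neg hr], ?_⟩
  change |across (r • v) (r • secondVector v a r)| = 1
  rw [across_smul_secondVector hv hr, abs_one]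

theorem span_reducedGroup_zero :
    Submodule.span ℝ (reducedGroup v a 0 : Set (Euc 2)) = Submodule.span ℝ {v} := by
  rw [reducedGroup, if_pos rfl]
  refine le_antisymm (Submodule.span_le.2 ?_)
    (Submodule.span_mono (Set.singleton_subset_iff.2 (AddSubgroup.mem_zmultiples v)))
  rintro _ ⟨m, rfl⟩
  exact zsmul_mem (Submodule.mem_span_singleton_self v) m

theorem span_rescaledGroup_zero :
    Submodule.span ℝ (rescaledGroup v a 0 : Set (Euc 2)) = Submodule.span ℝ {v} := by
  rw [rescaledGroup, if_pos rfl]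
  exact Submodule.span_eq (Submodule.span ℝ {v})

theorem coe_rescaledGroup_zero :
    (rescaledGroup v a 0 : Set (Euc 2)) =
      Submodule.span ℝ (reducedGroup v a 0 : Set (Euc 2)) := by
  rw [span_reducedGroup_zero, rescaledGroup, if_pos rfl]
  rfl

theorem span_singleton_ne_top : Submodule.span ℝ {v} ≠ ⊤ := by
  intro h
  have h1 : quarterTurn v ∈ Submodule.span ℝ {v} := h ▸ Submodule.mem_top
  obtain ⟨c, hc⟩ := Submodule.mem_span_singleton.1 h1
  have h0 := congrArg (fun w : Euc 2 => w 0) hc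
  have h2 := congrArg (fun w : Euc 2 => w 1) hc
  simp [quarterTurn] at h0 h2
  have hv0 : v = 0 := by
    have : v 0 ^ 2 + v 1 ^ 2 = 0 := by linear_combination v 1 * h0 - v 0 * h2
    rw [← norm_sq_plane] at this
    simpa using this
  have hfin := finrank_top ℝ (Euc 2)
  rw [← h, hv0, Submodule.span_zero_singleton, finrank_bot] at hfin
  simp at hfin

/-- A reduced group determines its rescaling and vice versa. -/
theorem reducedGroup_eq_iff {v' : Euc 2} {a' r' : ℝ} (hv : ‖v‖ = 1) (ha : |a| ≤ 1 / 2) (hr : 0 ≤ r)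
    (har : r ^ 4 * (1 - a ^ 2) ≤ 1) (hv' : ‖v'‖ = 1) (ha' : |a'| ≤ 1 / 2) (hr' : 0 ≤ r')
    (har' : r' ^ 4 * (1 - a' ^ 2) ≤ 1) :
    reducedGroup v a r = reducedGroup v' a' r' ↔
      rescaledGroup v a r = rescaledGroup v' a' r' := by
  rcases hr.eq_or_lt with rfl | hr <;> rcases hr'.eq_or_lt with rfl | hr'
  · constructor
    · intro h
      apply SetLike.coe_injective
      rw [coe_rescaledGroup_zero, coe_rescaledGroup_zero, h]
    · intro h
      have hmem : v' ∈ Submodule.span ℝ {v} := by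
        rw [← span_rescaledGroup_zero (a := a), h, span_rescaledGroup_zero]
        exact Submodule.mem_span_singleton_self v'
      obtain ⟨c, rfl⟩ := Submodule.mem_span_singleton.1 hmem
      rw [norm_smul, hv, mul_one, Real.norm_eq_abs] at hv'
      simp only [reducedGroup, if_true]
      rcases eq_or_eq_neg_of_abs_eq hv' with rfl | rfl
      · rw [one_smul]
      · rw [neg_smul, one_smul, AddSubgroup.zmultiples_neg]
  · refine iff_of_false (fun h => ?_) (fun h => ?_)
    · have := (isLattice_reducedGroup hv' ha' hr'.ne' har').2
      rw [← h, span_reducedGroup_zero] at this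
      exact span_singleton_ne_top this
    · have := (isLattice_rescaledGroup hv' ha' hr' har').2
      rw [← h, span_rescaledGroup_zero] at this
      exact span_singleton_ne_top this
  · refine iff_of_false (fun h => ?_) (fun h => ?_)
    · have := (isLattice_reducedGroup hv ha hr.ne' har).2
      rw [h, span_reducedGroup_zero] at this
      exact span_singleton_ne_top this
    · have := (isLattice_rescaledGroup hv ha hr har).2
      rw [h, span_rescaledGroup_zero] at this
      exact span_singleton_ne_top this
  · constructor
    · intro h
      have hcl := h
      rw [reducedGroup, reducedGroup, if_neg hr.ne', if_neg hr'.ne'] at hcl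
      have hcov := abs_across_eq_of_closure_eq hcl
        (by rw [across_secondVector hv]; positivity) (by rw [across_secondVector hv']; positivity)
      rw [across_secondVector hv, across_secondVector hv', abs_of_pos (by positivity),
        abs_of_pos (by positivity), inv_inj, pow_left_inj₀ hr.le hr'.le two_ne_zero] at hcov
      apply SetLike.coe_injective
      rw [coe_rescaledGroup_of_ne_zero hr.ne', coe_rescaledGroup_of_ne_zero hr'.ne', h, hcov]
    · intro h
      have norm_gen : ∀ {u : Euc 2} {s : ℝ}, ‖u‖ = 1 → 0 < s → ‖s • u‖ = s := fun hu hs => by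
        rw [norm_smul, hu, mul_one, Real.norm_of_nonneg hs.le]
      have gen_ne : ∀ {u : Euc 2} {s : ℝ}, ‖u‖ = 1 → 0 < s → s • u ≠ 0 := fun hu hs h0 => by
        have := norm_gen hu hs
        rw [h0, norm_zero] at this
        exact hs.ne this
      have hrr : r = r' := by
        apply le_antisymm
        · rw [← norm_gen hv' hr']
          exact le_norm_of_mem_rescaledGroup hv ha hr har
            (h ▸ smul_left_mem_rescaledGroup hr'.ne') (gen_ne hv' hr')
        · rw [← norm_gen hv hr]
          exact le_norm_of_mem_rescaledGroup hv' ha' hr' har'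
            (h ▸ smul_left_mem_rescaledGroup hr.ne') (gen_ne hv hr)
      have hset := congrArg (fun H : AddSubgroup (Euc 2) => (H : Set (Euc 2))) h
      simp only [coe_rescaledGroup_of_ne_zero hr.ne', coe_rescaledGroup_of_ne_zero hr'.ne'] at hset
      apply SetLike.coe_injective
      subst hrr
      simpa only [inv_smul_smul₀ hr.ne'] using congrArg (r⁻¹ • ·) hset

end Reduced

/-! ### The parameter space -/

/-- The compact space of reduced bases, with degenerate ones included. -/
def reducedParams : Set (Euc 2 × ℝ × ℝ) :=
  {p | ‖p.1‖ = 1 ∧ |p.2.1| ≤ 1 / 2 ∧ 0 ≤ p.2.2 ∧ p.2.2 ^ 4 * (1 - p.2.1 ^ 2) ≤ 1}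

theorem isCompact_reducedParams : IsCompact reducedParams := by
  have hK : IsCompact ((Metric.sphere (0 : Euc 2) 1) ×ˢ
      ((Set.Icc (-(1 / 2)) (1 / 2) : Set ℝ) ×ˢ (Set.Icc 0 2 : Set ℝ))) :=
    (isCompact_sphere 0 1).prod (isCompact_Icc.prod isCompact_Icc)
  refine hK.of_isClosed_subset ?_ ?_
  · simp only [reducedParams, Set.ofPred_and]
    refine (isClosed_eq ?_ ?_).inter ((isClosed_le ?_ ?_).inter
      ((isClosed_le ?_ ?_).inter (isClosed_le ?_ ?_))) <;> fun_prop
  · rintro ⟨v, a, r⟩ ⟨hv, ha, hr, har⟩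
    refine ⟨by simpa using hv, abs_le.1 ha, hr, ?_⟩
    dsimp only at ha hr har ⊢
    have ha2 : a ^ 2 ≤ 1 / 4 := by
      rw [← sq_abs]
      nlinarith [abs_nonneg a]
    by_contra hlt
    have h16 : (2 : ℝ) ^ 4 < r ^ 4 := pow_lt_pow_left₀ (not_le.1 hlt) (by norm_num) (by norm_num)
    nlinarith

instance : CompactSpace reducedParams := isCompact_iff_compactSpace.1 isCompact_reducedParams

theorem isClosed_graph_reducedGroup :
    IsClosed {q : reducedParams × Euc 2 |
      q.2 ∈ reducedGroup q.1.1.1 q.1.1.2.1 q.1.1.2.2} := by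
  have hZ : IsClosed (Set.range ((↑) : ℤ → ℝ)) := Int.isClosedEmbedding_coe_real.isClosed_range
  simp only [fun q : reducedParams × Euc 2 => mem_reducedGroup_iff (x := q.2)
    (a := q.1.1.2.1) (r := q.1.1.2.2) q.1.2.1, Set.ofPred_and, Set.ofPred_or]
  refine (hZ.preimage ?_).inter ((hZ.preimage ?_).inter
    ((isClosed_le ?_ ?_).union (isClosed_eq ?_ ?_))) <;> fun_prop

theorem isClosed_graph_rescaledGroup :
    IsClosed {q : reducedParams × Euc 2 |
      q.2 ∈ rescaledGroup q.1.1.1 q.1.1.2.1 q.1.1.2.2} := by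
  have hZ : IsClosed (Set.range ((↑) : ℤ → ℝ)) := Int.isClosedEmbedding_coe_real.isClosed_range
  simp only [fun q : reducedParams × Euc 2 => mem_rescaledGroup_iff (x := q.2)
    (a := q.1.1.2.1) (r := q.1.1.2.2) q.1.2.1, Set.ofPred_and, Set.ofPred_or]
  refine (hZ.preimage ?_).inter (IsClosed.inter ?_
    ((isClosed_le ?_ ?_).union (isClosed_eq ?_ ?_)))
  · fun_prop
  · have hopen : IsOpen {q : reducedParams × Euc 2 | q.1.1.2.2 ≠ 0} :=
      isOpen_ne_fun (by fun_prop) (by fun_prop)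
    have hcont : ContinuousOn (fun q : reducedParams × Euc 2 =>
        (along q.1.1.1 q.2 - q.1.1.2.1 * (q.1.1.2.2 ^ 2 * across q.1.1.1 q.2)) / q.1.1.2.2)
        {q | q.1.1.2.2 ≠ 0} :=
      ContinuousOn.div (Continuous.continuousOn (by fun_prop))
        (Continuous.continuousOn (by fun_prop)) fun q hq => hq
    rw [← isOpen_compl_iff]
    convert hcont.isOpen_inter_preimage hopen hZ.isOpen_compl using 1
    ext q
    simp only [Set.mem_compl_iff, Set.mem_ofPred_eq, Set.mem_union, not_or, Set.mem_inter_iff,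
      Set.mem_preimage, ne_eq]
  all_goals fun_prop

/-- The closed subgroup with a given reduced basis. -/
def reducedPoint (p : reducedParams) : ChabautyPoint 2 :=
  ⟨reducedGroup p.1.1 p.1.2.1 p.1.2.2, isClosed_graph_reducedGroup.preimage
    (by fun_prop : Continuous fun x : Euc 2 => (p, x))⟩

/-- The closed subgroup of unit covolume (or line) with a given reduced basis up to scale. -/
def rescaledPoint (p : reducedParams) : ChabautyPoint 2 :=
  ⟨rescaledGroup p.1.1 p.1.2.1 p.1.2.2, isClosed_graph_rescaledGroup.preimage
    (by fun_prop : Continuous fun x : Euc 2 => (p, x))⟩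

/-- If `g` is continuous at `p`, its values are eventually close to `g p`. -/
theorem eventually_exists_dist_lt {P : Type*} [TopologicalSpace P] {f : P → AddSubgroup (Euc 2)}
    {p : P} {g : P → Euc 2} (hg : ContinuousAt g p) (hmem : ∀ᶠ q in 𝓝 p, g q ∈ f q) {ε : ℝ}
    (hε : 0 < ε) : ∀ᶠ q in 𝓝 p, ∃ y ∈ f q, dist y (g p) < ε := by
  filter_upwards [hmem, hg (Metric.ball_mem_nhds _ hε)] with q h1 h2
  exact ⟨g q, h1, h2⟩

theorem continuousAt_secondVector {p : reducedParams} (hp : p.1.2.2 ≠ 0) :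
    ContinuousAt (fun q : reducedParams => secondVector q.1.1 q.1.2.1 q.1.2.2) p := by
  unfold secondVector
  have hinv : ContinuousAt (fun q : reducedParams => (q.1.2.2 ^ 2)⁻¹) p :=
    ContinuousAt.inv₀ (f := fun q : reducedParams => q.1.2.2 ^ 2) (by fun_prop) (pow_ne_zero 2 hp)
  fun_prop

theorem eventually_scale_ne_zero {p : reducedParams} (hp : p.1.2.2 ≠ 0) :
    ∀ᶠ q : reducedParams in 𝓝 p, q.1.2.2 ≠ 0 :=
  (isOpen_ne_fun (f := fun q : reducedParams => q.1.2.2) (g := fun _ => 0) (by fun_prop)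
    (by fun_prop)).mem_nhds hp

theorem continuous_reducedPoint : Continuous reducedPoint := by
  refine continuous_chabauty_of_isClosed_graph _ isClosed_graph_reducedGroup ?_
  intro p x hx ε hε
  by_cases hp : p.1.2.2 = 0
  · have hx' : x ∈ AddSubgroup.zmultiples p.1.1 := by
      simpa only [reducedPoint, reducedGroup, if_pos hp] using hx
    obtain ⟨m, rfl⟩ := AddSubgroup.mem_zmultiples_iff.1 hx'
    exact eventually_exists_dist_lt (f := fun q => (reducedPoint q).1)
      (g := fun q : reducedParams => m • q.1.1) (Continuous.continuousAt (by fun_prop))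
      (.of_forall fun q => zsmul_mem left_mem_reducedGroup m) hε
  · have hx' : x ∈ AddSubgroup.closure {p.1.1, secondVector p.1.1 p.1.2.1 p.1.2.2} := by
      simpa only [reducedPoint, reducedGroup, if_neg hp] using hx
    obtain ⟨m, n, rfl⟩ := AddSubgroup.mem_closure_pair.1 hx'
    refine eventually_exists_dist_lt (f := fun q => (reducedPoint q).1)
      (g := fun q : reducedParams => m • q.1.1 + n • secondVector q.1.1 q.1.2.1 q.1.2.2)
      (ContinuousAt.add (Continuous.continuousAt (by fun_prop))
        ((continuousAt_secondVector hp).const_smul n)) ?_ hε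
    filter_upwards [eventually_scale_ne_zero hp] with q hq
    exact add_mem (zsmul_mem left_mem_reducedGroup m)
      (zsmul_mem (secondVector_mem_reducedGroup hq) n)

theorem continuous_rescaledPoint : Continuous rescaledPoint := by
  refine continuous_chabauty_of_isClosed_graph _ isClosed_graph_rescaledGroup ?_
  intro p x hx ε hε
  by_cases hp : p.1.2.2 = 0
  · have hx' : x ∈ Submodule.span ℝ {p.1.1} := by
      simpa only [rescaledPoint, rescaledGroup, if_pos hp, Submodule.mem_toAddSubgroup] using hx
    obtain ⟨c, rfl⟩ := Submodule.mem_span_singleton.1 hx'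
    have hdir : ∀ᶠ q : reducedParams in 𝓝 p, dist (c • q.1.1) (c • p.1.1) < ε / 2 :=
      (Continuous.continuousAt (by fun_prop) :
        ContinuousAt (fun q : reducedParams => c • q.1.1) p) (Metric.ball_mem_nhds _ (half_pos hε))
    have hscale : ∀ᶠ q : reducedParams in 𝓝 p, q.1.2.2 < ε :=
      (isOpen_lt (f := fun q : reducedParams => q.1.2.2) (g := fun _ => ε) (by fun_prop)
        (by fun_prop)).mem_nhds (by simpa [hp] using hε)
    filter_upwards [hdir, hscale] with q hq1 hq2
    by_cases hq : q.1.2.2 = 0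
    · refine ⟨c • q.1.1, ?_, by linarith⟩
      simp only [rescaledPoint, rescaledGroup, if_pos hq, Submodule.mem_toAddSubgroup]
      exact Submodule.smul_mem _ _ (Submodule.mem_span_singleton_self _)
    · have hq0 : 0 < q.1.2.2 := lt_of_le_of_ne q.2.2.2.1 (Ne.symm hq)
      refine ⟨round (c / q.1.2.2) • q.1.2.2 • q.1.1,
        zsmul_mem (smul_left_mem_rescaledGroup hq) _, ?_⟩
      refine (dist_triangle _ (c • q.1.1) _).trans_lt ?_
      have hround : dist (round (c / q.1.2.2) • q.1.2.2 • q.1.1) (c • q.1.1) ≤ q.1.2.2 / 2 := by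
        rw [dist_comm, dist_eq_norm, ← Int.cast_smul_eq_zsmul ℝ, smul_smul, ← sub_smul, norm_smul,
          q.2.1, mul_one, Real.norm_eq_abs]
        have : c - round (c / q.1.2.2) * q.1.2.2 =
            (c / q.1.2.2 - round (c / q.1.2.2)) * q.1.2.2 := by field_simp
        rw [this, abs_mul, abs_of_pos hq0]
        nlinarith [abs_sub_round (c / q.1.2.2)]
      linarith
  · obtain ⟨y, hy, rfl⟩ := (mem_rescaledGroup_of_ne_zero hp).1 hx
    have hy' : y ∈ AddSubgroup.closure {p.1.1, secondVector p.1.1 p.1.2.1 p.1.2.2} := by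
      simpa only [reducedGroup, if_neg hp] using hy
    obtain ⟨m, n, rfl⟩ := AddSubgroup.mem_closure_pair.1 hy'
    refine eventually_exists_dist_lt (f := fun q => (rescaledPoint q).1)
      (g := fun q : reducedParams =>
        q.1.2.2 • (m • q.1.1 + n • secondVector q.1.1 q.1.2.1 q.1.2.2))
      ?_ ?_ hε
    · have := continuousAt_secondVector hp
      fun_prop
    filter_upwards [eventually_scale_ne_zero hp] with q hq
    exact (mem_rescaledGroup_of_ne_zero hq).2 ⟨_, add_mem (zsmul_mem left_mem_reducedGroup m)
      (zsmul_mem (secondVector_mem_reducedGroup hq) n), rfl⟩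

/-! ### Reduction theory -/

/-- Every subgroup whose shortest nonzero vector has norm one has a reduced basis. -/
theorem exists_reducedGroup_eq {Γ : AddSubgroup (Euc 2)} {v : Euc 2} (hvΓ : v ∈ Γ) (hv : ‖v‖ = 1)
    (hmin : ∀ y ∈ Γ, y ≠ 0 → 1 ≤ ‖y‖) :
    ∃ p : reducedParams, reducedGroup p.1.1 p.1.2.1 p.1.2.2 = Γ := by
  have translate : ∀ x ∈ Γ, ∃ k : ℤ, x - k • v ∈ Γ ∧ |along v (x - k • v)| ≤ 1 / 2 ∧
      across v (x - k • v) = across v x := by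
    intro x hx
    refine ⟨round (along v x), sub_mem hx (zsmul_mem hvΓ _), ?_, ?_⟩
    · rw [along_sub, along_zsmul, along_self hv, mul_one]
      exact abs_sub_round _
    · rw [across_sub, across_zsmul, across_self, mul_zero, sub_zero]
  have gap : ∀ x ∈ Γ, across v x ^ 2 < 3 / 4 → ∃ k : ℤ, x = k • v := by
    intro x hx hlt
    obtain ⟨k, hk, h1, h2⟩ := translate x hx
    refine ⟨k, ?_⟩
    by_contra hne
    have hle := hmin _ hk (sub_ne_zero.2 hne)
    have hsq := norm_sq_eq_along_across hv (x - k • v)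
    rw [h2] at hsq
    have : along v (x - k • v) ^ 2 ≤ 1 / 4 := by
      rw [← sq_abs]
      nlinarith [abs_nonneg (along v (x - k • v))]
    nlinarith
  let height : Euc 2 →+ ℝ := AddMonoidHom.mk' (across v) fun x y => by simp [across]; ring
  obtain ⟨b, hb⟩ : ∃ b, Γ.map height = AddSubgroup.closure {b} := by
    refine AddSubgroup.cyclic_of_isolated_zero (a := 1 / 2) (by norm_num) ?_
    rw [Set.disjoint_left]
    rintro _ ⟨x, hx, rfl⟩ ⟨h1, h2⟩
    have h1' : 0 < across v x := h1
    have h2' : across v x < 1 / 2 := h2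
    obtain ⟨k, rfl⟩ := gap x hx (by nlinarith)
    rw [across_zsmul, across_self, mul_zero] at h1'
    exact h1'.false
  have height_eq : ∀ x ∈ Γ, ∃ n : ℤ, across v x = n * |b| := by
    intro x hx
    have : across v x ∈ AddSubgroup.closure {b} := hb ▸ ⟨x, hx, rfl⟩
    obtain ⟨n, hn⟩ := AddSubgroup.mem_closure_singleton.1 this
    rw [zsmul_eq_mul] at hn
    rcases abs_choice b with h | h
    · exact ⟨n, by rw [h, hn]⟩
    · exact ⟨-n, by rw [h, ← hn]; push_cast; ring⟩
  obtain ⟨w, hw, hwb⟩ : ∃ w ∈ Γ, across v w = |b| := by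
    have hmem : |b| ∈ Γ.map height := by
      rw [hb]
      have := AddSubgroup.mem_closure_singleton_self (x := b)
      rcases abs_choice b with h | h <;> rw [h]
      · exact this
      · exact neg_mem this
    obtain ⟨w, hw, h⟩ := hmem
    exact ⟨w, hw, h⟩
  rcases (abs_nonneg b).eq_or_lt with hb0 | hbpos
  · refine ⟨⟨(v, 0, 0), hv, by norm_num, le_rfl, by norm_num⟩, ?_⟩
    ext x
    rw [reducedGroup, if_pos rfl, AddSubgroup.mem_zmultiples_iff]
    constructor
    · rintro ⟨k, rfl⟩
      exact zsmul_mem hvΓ k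
    · intro hx
      obtain ⟨n, hn⟩ := height_eq x hx
      obtain ⟨k, hk⟩ := gap x hx (by rw [hn, ← hb0]; norm_num)
      exact ⟨k, hk.symm⟩
  · obtain ⟨k, hk, h1, h2⟩ := translate w hw
    set u := w - k • v
    rw [hwb] at h2
    set r := (√|b|)⁻¹ with hr
    have hrpos : 0 < r := inv_pos.2 (Real.sqrt_pos.2 hbpos)
    have hr2 : (r ^ 2)⁻¹ = |b| := by rw [hr, inv_pow, inv_inv, Real.sq_sqrt hbpos.le]
    have hsecond : secondVector v (along v u) r = u :=
      (eq_smul_add_quarterTurn_iff hv).2 ⟨rfl, by rw [h2, hr2]⟩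
    have hunorm : 1 ≤ along v u ^ 2 + |b| ^ 2 := by
      rw [← h2, ← norm_sq_eq_along_across hv]
      refine one_le_pow₀ (hmin u hk fun h0 => ?_)
      rw [h0] at h2
      simp [across] at h2
      exact hbpos.ne (by simpa using h2)
    refine ⟨⟨(v, along v u, r), hv, h1, hrpos.le, ?_⟩, ?_⟩
    · have hr4 : r ^ 4 * |b| ^ 2 = 1 := by
        rw [← hr2]
        field_simp
      have hr4pos : 0 < r ^ 4 := by positivity
      dsimp only
      nlinarith
    · apply le_antisymm
      · rw [reducedGroup, if_neg hrpos.ne', AddSubgroup.closure_le]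
        rintro y (rfl | rfl)
        · exact hvΓ
        · dsimp only
          rw [hsecond]
          exact hk
      · intro x hx
        obtain ⟨n, hn⟩ := height_eq x hx
        obtain ⟨m, hm⟩ := gap (x - n • u) (sub_mem hx (zsmul_mem hk n)) (by
          rw [across_sub, across_zsmul, h2, hn]
          norm_num)
        have : x = m • v + n • u := by rw [← hm]; abel
        rw [this]
        refine add_mem (zsmul_mem left_mem_reducedGroup m) (zsmul_mem ?_ n)
        have hmem := secondVector_mem_reducedGroup (v := v) (a := along v u) hrpos.ne'
        rwa [hsecond] at hmem

theorem reducedPoint_eq_iff (p q : reducedParams) :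
    reducedPoint p = reducedPoint q ↔ rescaledPoint p = rescaledPoint q := by
  have h := reducedGroup_eq_iff p.2.1 p.2.2.1 p.2.2.2.1 p.2.2.2.2
    q.2.1 q.2.2.1 q.2.2.2.1 q.2.2.2.2
  exact ⟨fun e => Subtype.ext (h.1 (congrArg Subtype.val e)),
    fun e => Subtype.ext (h.2 (congrArg Subtype.val e))⟩

theorem range_reducedPoint : Set.range reducedPoint = normOne := by
  apply Set.Subset.antisymm
  · rintro _ ⟨⟨⟨v, a, r⟩, hv, ha, hr, har⟩, rfl⟩
    exact ⟨v, left_mem_reducedGroup, hv,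
      fun y hy hy0 => one_le_norm_of_mem_reducedGroup hv ha har hy hy0⟩
  · rintro Γ ⟨v, hvΓ, hv, hmin⟩
    obtain ⟨p, hp⟩ := exists_reducedGroup_eq hvΓ hv hmin
    exact ⟨p, Subtype.ext hp⟩

/-- A discrete nontrivial closed subgroup has a shortest nonzero vector. -/
theorem exists_shortest_vector {Γ : AddSubgroup (Euc 2)} (hcl : IsClosed (Γ : Set (Euc 2)))
    (hdisc : DiscreteTopology Γ) (hne : ∃ x ∈ Γ, x ≠ 0) :
    ∃ x ∈ Γ, x ≠ 0 ∧ ∀ y ∈ Γ, y ≠ 0 → ‖x‖ ≤ ‖y‖ := by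
  have hopen : IsOpen ({0} : Set Γ) := isOpen_discrete _
  obtain ⟨U, hU, hU0⟩ := isOpen_induced_iff.1 hopen
  have hset : (Γ : Set (Euc 2)) \ {0} = (Γ : Set (Euc 2)) ∩ Uᶜ := by
    ext x
    refine and_congr_right fun hx => not_congr ?_
    have := Set.ext_iff.1 hU0 ⟨x, hx⟩
    simpa [Subtype.ext_iff] using this.symm
  have hclosed : IsClosed ((Γ : Set (Euc 2)) \ {0}) := hset ▸ hcl.inter hU.isClosed_compl
  obtain ⟨x₀, hx₀, hx₀0⟩ := hne
  obtain ⟨x, hx, hdist⟩ := hclosed.exists_infDist_eq_dist ⟨x₀, hx₀, hx₀0⟩ 0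
  refine ⟨x, hx.1, hx.2, fun y hy hy0 => ?_⟩
  rw [← dist_zero_left x, ← hdist, ← dist_zero_left y]
  exact Metric.infDist_le_dist_of_mem ⟨hy, hy0⟩

theorem exists_rescaledPoint_eq {Γ : ChabautyPoint 2} (hlat : IsLattice Γ.1)
    (hcov : UnitCovolume Γ.1) : ∃ p, rescaledPoint p = Γ := by
  obtain ⟨e, f, hef, hdet⟩ := hcov
  change |across e f| = 1 at hdet
  have hef0 : across e f ≠ 0 := fun h => by simp [h] at hdet
  obtain ⟨x, hx, hx0, hmin⟩ := exists_shortest_vector Γ.2 hlat.1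
    ⟨e, hef ▸ AddSubgroup.subset_closure (by simp), fun h => hef0 (by simp [h, across])⟩
  have hl : 0 < ‖x‖ := norm_pos_iff.2 hx0
  have key : ∃ p : reducedParams, reducedGroup p.1.1 p.1.2.1 p.1.2.2 =
      AddSubgroup.closure {‖x‖⁻¹ • e, ‖x‖⁻¹ • f} := by
    have mem_iff : ∀ y, y ∈ AddSubgroup.closure {‖x‖⁻¹ • e, ‖x‖⁻¹ • f} ↔ ‖x‖ • y ∈ Γ.1 := by
      intro y
      rw [← hef, AddSubgroup.mem_closure_pair, AddSubgroup.mem_closure_pair]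
      refine exists_congr fun m => exists_congr fun n => ?_
      rw [smul_comm m, smul_comm n, ← smul_add, inv_smul_eq_iff₀ hl.ne']
    refine exists_reducedGroup_eq (v := ‖x‖⁻¹ • x) ((mem_iff _).2 ?_) ?_ ?_
    · rwa [smul_inv_smul₀ hl.ne']
    · rw [norm_smul, norm_inv, norm_norm, inv_mul_cancel₀ hl.ne']
    · intro y hy hy0
      have := hmin _ ((mem_iff y).1 hy) (smul_ne_zero hl.ne' hy0)
      rw [norm_smul, norm_norm] at this
      exact le_of_mul_le_mul_left (by rwa [mul_one]) hl
  obtain ⟨⟨⟨v, a, r⟩, hv, ha, hr, har⟩, hp⟩ := key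
  dsimp only at hv ha hr har hp
  refine ⟨⟨(v, a, r), hv, ha, hr, har⟩, Subtype.ext ?_⟩
  have hsmall : across (‖x‖⁻¹ • e) (‖x‖⁻¹ • f) ≠ 0 := by
    rw [across_smul_smul]
    positivity
  have hr0 : r ≠ 0 := by
    rintro rfl
    have hspan : Submodule.span ℝ (reducedGroup v a 0 : Set (Euc 2)) = ⊤ := by
      rw [hp]
      exact span_eq_top_of_across_ne_zero (AddSubgroup.subset_closure (by simp))
        (AddSubgroup.subset_closure (by simp)) hsmall
    rw [span_reducedGroup_zero] at hspan
    exact span_singleton_ne_top hspan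
  have hlr : ‖x‖ = r := by
    have hcl := hp
    rw [reducedGroup, if_neg hr0] at hcl
    have hcov := abs_across_eq_of_closure_eq hcl
      (by rw [across_secondVector hv]; positivity) hsmall
    rw [across_secondVector hv, across_smul_smul, abs_mul, hdet, mul_one, ← sq, ← inv_pow,
      abs_of_nonneg (by positivity), abs_of_nonneg (by positivity), inv_pow, inv_pow, inv_inj,
      pow_left_inj₀ hr hl.le two_ne_zero] at hcov
    exact hcov.symm
  apply SetLike.coe_injective
  change (rescaledGroup v a r : Set (Euc 2)) = Γ.1
  rw [coe_rescaledGroup_of_ne_zero hr0, hp, ← hef, ← hlr]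
  ext y
  simp only [Set.mem_smul_set, SetLike.mem_coe, AddSubgroup.mem_closure_pair]
  constructor
  · rintro ⟨_, ⟨m, n, rfl⟩, rfl⟩
    refine ⟨m, n, ?_⟩
    rw [smul_comm m, smul_comm n, ← smul_add, smul_inv_smul₀ hl.ne']
  · rintro ⟨m, n, rfl⟩
    refine ⟨_, ⟨m, n, rfl⟩, ?_⟩
    rw [smul_comm m, smul_comm n, ← smul_add, smul_inv_smul₀ hl.ne']

/-- Nondegenerate parameters are dense. -/
theorem mem_closure_pos_scale (p : reducedParams) :
    p ∈ closure {q : reducedParams | 0 < q.1.2.2} := by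
  obtain ⟨⟨v, a, r⟩, hv, ha, hr, har⟩ := p
  rcases hr.eq_or_lt with h0 | hpos
  · dsimp only at h0
    subst h0
    have hmem : ∀ k : ℕ, (v, a, 1 / ((k : ℝ) + 1)) ∈ reducedParams := by
      intro k
      have h1 : 1 / ((k : ℝ) + 1) ≤ 1 := by
        rw [div_le_one (by positivity)]
        linarith [k.cast_nonneg (α := ℝ)]
      refine ⟨hv, ha, by positivity, ?_⟩
      have h4 : (1 / ((k : ℝ) + 1)) ^ 4 ≤ 1 := pow_le_one₀ (by positivity) h1
      have : 0 ≤ (1 / ((k : ℝ) + 1)) ^ 4 := by positivity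
      dsimp only
      nlinarith [sq_nonneg a]
    refine mem_closure_of_tendsto (f := fun k : ℕ =>
      (⟨(v, a, 1 / ((k : ℝ) + 1)), hmem k⟩ : reducedParams)) (b := atTop) ?_
      (.of_forall fun k => ?_)
    · rw [tendsto_subtype_rng]
      exact tendsto_const_nhds.prodMk_nhds
        (tendsto_const_nhds.prodMk_nhds tendsto_one_div_add_atTop_nhds_zero_nat)
    · change 0 < 1 / ((k : ℝ) + 1)
      positivity
  · exact subset_closure hpos

theorem range_rescaledPoint : Set.range rescaledPoint = covolOne := by
  apply Set.Subset.antisymm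
  · rintro _ ⟨p, rfl⟩
    refine map_mem_closure continuous_rescaledPoint (mem_closure_pos_scale p) ?_
    rintro ⟨⟨v, a, r⟩, hv, ha, _, har⟩ hr
    exact ⟨isLattice_rescaledGroup hv ha hr har, unitCovolume_rescaledGroup hv hr.ne'⟩
  · refine closure_minimal ?_ (isCompact_range continuous_rescaledPoint).isClosed
    rintro Γ ⟨hlat, hcov⟩
    exact exists_rescaledPoint_eq hlat hcov

/-- A continuous map from a compact space to a Hausdorff space is a quotient map onto its range. -/
theorem isQuotientMap_codRestrict {P X : Type*} [TopologicalSpace P] [CompactSpace P]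
    [TopologicalSpace X] [T2Space X] {f : P → X} (hf : Continuous f) {s : Set X}
    (hs : Set.range f = s) (hmem : ∀ p, f p ∈ s) : IsQuotientMap (Set.codRestrict f s hmem) := by
  have hc : Continuous (Set.codRestrict f s hmem) := hf.codRestrict hmem
  refine hc.isClosedMap.isQuotientMap hc ?_
  rintro ⟨x, hx⟩
  obtain ⟨p, rfl⟩ := hs ▸ hx
  exact ⟨p, rfl⟩

/-- 𝒞₁ is homeomorphic to 𝒞¹, via the map sending Γ ∈ 𝒞¹ to the unique rescaling tΓ of unit
covolume (a lattice is rescaled by t = cov(Γ)^{-1/2} > 0; a rank-one subgroup, isomorphic to ℤ,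
is sent to the line it spans). -/
theorem covolOne_homeo_normOne :
    ∃ Φ : normOne ≃ₜ covolOne,
      ∀ Γ : normOne,
        (IsLattice Γ.1.1 →
          ∃ t : ℝ, 0 < t ∧ ((Φ Γ).1.1 : Set (Euc 2)) = t • (Γ.1.1 : Set (Euc 2)) ∧
            IsLattice (Φ Γ).1.1 ∧ UnitCovolume (Φ Γ).1.1) ∧
        (¬ IsLattice Γ.1.1 →
          ((Φ Γ).1.1 : Set (Euc 2)) =
            (Submodule.span ℝ (Γ.1.1 : Set (Euc 2)) : Set (Euc 2))) := by
  have hmem : ∀ p, reducedPoint p ∈ normOne := fun p => range_reducedPoint ▸ ⟨p, rfl⟩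
  have hmem' : ∀ p, rescaledPoint p ∈ covolOne := fun p => range_rescaledPoint ▸ ⟨p, rfl⟩
  obtain ⟨Φ, hΦ⟩ := exists_homeomorph_of_isQuotientMap
    (isQuotientMap_codRestrict continuous_reducedPoint range_reducedPoint hmem)
    (isQuotientMap_codRestrict continuous_rescaledPoint range_rescaledPoint hmem')
    fun p q => Subtype.mk_eq_mk.trans ((reducedPoint_eq_iff p q).trans Subtype.mk_eq_mk.symm)
  refine ⟨Φ, fun ⟨Γ, hΓ⟩ => ?_⟩
  obtain ⟨p, rfl⟩ := range_reducedPoint.symm ▸ hΓ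
  have hΦp : Φ ⟨reducedPoint p, hΓ⟩ = ⟨rescaledPoint p, hmem' p⟩ := hΦ p
  rw [hΦp]
  obtain ⟨⟨v, a, r⟩, hv, ha, hr, har⟩ := p
  dsimp only at hv ha hr har
  refine ⟨fun hlat => ?_, fun hlat => ?_⟩
  · have hr0 : r ≠ 0 := by
      rintro rfl
      exact span_singleton_ne_top (span_reducedGroup_zero.symm.trans hlat.2)
    have hpos : 0 < r := lt_of_le_of_ne hr hr0.symm
    exact ⟨r, hpos, coe_rescaledGroup_of_ne_zero hr0, isLattice_rescaledGroup hv ha hpos har,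
      unitCovolume_rescaledGroup hv hr0⟩
  · obtain rfl : r = 0 := by
      by_contra hr0
      exact hlat (isLattice_reducedGroup hv ha hr0 har)
    exact coe_rescaledGroup_zero
end
end
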